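/- Let (Q, m, k) be a commutative Noetherian local ring and let f, g be an exact pair of zerodivisors in m, i.e. f and g are nonzero elements of m with ann_Q(f) = (g) and ann_Q(g) = (f). Set R = Q/(f). If M is a finitely generated R-module with f ∈ m·ann_Q(M), then M is inert by the surjection Q → R; that is, for every integer i ≥ 0, Σ_{p+q=i} β_p^R(M)·β_q^Q(k) = Σ_{p+q=i} β_p^Q(M)·β_q^R(k). -/

import Mathlib

open CategoryTheory TensorProduct

/-- The `i`-th Betti number of a module `M` over a local ring `A`:
`β_i^A(M) = dim_k Tor_i^A(M, k)`, computed as the `k`-dimension of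
`k ⊗_A Tor_i^A(M, k)` (the two agree since `Tor_i^A(M, k)` is a `k`-vector
space, being annihilated by the maximal ideal of `A`). -/
noncomputable def bettiNumber (A : Type) [CommRing A] [IsLocalRing A]
    (M : Type) [AddCommGroup M] [Module A M] (i : ℕ) : ℕ :=
  Module.finrank (IsLocalRing.ResidueField A)
    (IsLocalRing.ResidueField A ⊗[A]
      (((Tor (ModuleCat A) i).obj (ModuleCat.of A M)).obj
        (ModuleCat.of A (IsLocalRing.ResidueField A))))

open Finset.HasAntidiagonal (antidiagonal)
open IsLocalRing MonoidalCategory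

universe u v

/-!
Write `f = φ s`, where `φ : V → Q` maps a free module onto `m` and `s` has entries in `ann M`. The
class of `g s` in the first Koszul homology is nonzero, because otherwise a divided power argument
shows that `1` is a boundary modulo `g`. Hence, in a resolution `F` of `k` by a free differential
graded module over the Koszul algebra, some endomorphism `χ` of degree `-2` detects this class. On
`F ⊗ Γ`, with `Γ` the divided powers of a variable of degree `2` and `τ` the shift, `d + s τ` has
square `f τ`, so it is a differential modulo `f`. Over `R` its homology is one copy of `k` in each
even degree, detected by the powers of `χ`, so `M ⊗ F ⊗ Γ` computes `∑ j, Tor_{n-2j}^R(M, k)`.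
Since `s` kills `M`, that complex is also the sum of `M ⊗ F` and its own shift by `2`. Comparing
lengths, `Tor^Q_n(M, k)` and `Tor^R_n(M, k)` have the same dimension. The same holds with `k` in
place of `M`, as `f ∈ m ^ 2`, and the two sums agree term by term.
-/

section TensorHomology

variable {A : Type u} [CommRing A]

/-- The functor `M ↦ M ⊗ K`. -/
noncomputable def tensorComplex (K : ChainComplex (ModuleCat.{u} A) ℕ) :
    ModuleCat.{u} A ⥤ ChainComplex (ModuleCat.{u} A) ℕ where
  obj M := ((tensorLeft M).mapHomologicalComplex _).obj K
  map φ := (NatTrans.mapHomologicalComplex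
    ((tensoringLeft (ModuleCat.{u} A)).map φ) (ComplexShape.down ℕ)).app K

instance (K : ChainComplex (ModuleCat.{u} A) ℕ) : (tensorComplex K).PreservesZeroMorphisms where
  map_zero M N := by
    ext i : 1
    exact ((tensorRight (K.X i)).map_zero M N)

theorem tensorComplex_shortExact (K : ChainComplex (ModuleCat.{u} A) ℕ)
    [∀ i, Module.Flat A (K.X i)] {S : ShortComplex (ModuleCat.{u} A)} (hS : S.ShortExact) :
    (S.map (tensorComplex K)).ShortExact :=
  HomologicalComplex.shortExact_of_degreewise_shortExact _ fun i ↦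
    hS.map_of_exact (tensorRight (K.X i))

variable {K W : ChainComplex (ModuleCat.{u} A) ℕ} (ρ : K ⟶ W)

/-- The natural map `M ⊗ K ⟶ M ⊗ W` induced by `ρ : K ⟶ W`. -/
noncomputable def tensorComplexMap : tensorComplex K ⟶ tensorComplex W where
  app M := ((tensorLeft M).mapHomologicalComplex _).map ρ
  naturality M N φ := by
    ext i : 1
    exact (whisker_exchange φ (ρ.f i)).symm

theorem homologyMap_tensorComplex_map_eq_zero {I : Ideal A} {n : ℕ} [QuasiIsoAt ρ n]
    (hW : ∀ a ∈ I, ∀ w : W.X n, a • w = 0) {M L : ModuleCat.{u} A} [Module.Flat A L]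
    {φ : M ⟶ L} (hφ : LinearMap.range φ.hom ≤ I • ⊤) :
    HomologicalComplex.homologyMap ((tensorComplex K).map φ) n = 0 := by
  have hzero : (((tensorComplex W).map φ).f n) = 0 := by
    refine ModuleCat.hom_ext (TensorProduct.ext' fun x w ↦ ?_)
    refine Submodule.smul_induction_on (p := fun y ↦ y ⊗ₜ[A] w = 0)
      (hφ (LinearMap.mem_range_self φ.hom x)) (fun a ha y _ ↦ ?_) fun y z hy hz ↦ ?_
    · rw [TensorProduct.smul_tmul, hW a ha, TensorProduct.tmul_zero]
    · rw [TensorProduct.add_tmul, hy, hz, add_zero]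
  have hiso : IsIso (HomologicalComplex.homologyMap ((tensorComplexMap ρ).app L) n) :=
    (quasiIsoAt_iff_isIso_homologyMap _ _).1
      (HomologicalComplex.quasiIsoAt_map_of_preservesHomology (i := n) ρ (tensorLeft L))
  rw [← cancel_mono (HomologicalComplex.homologyMap ((tensorComplexMap ρ).app L) n),
    ← HomologicalComplex.homologyMap_comp, (tensorComplexMap ρ).naturality,
    HomologicalComplex.homologyMap_comp]
  have hmap : HomologicalComplex.homologyMap ((tensorComplex W).map φ) n = 0 := by
    have hcyc : HomologicalComplex.cyclesMap ((tensorComplex W).map φ) n = 0 := by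
      rw [← cancel_mono (HomologicalComplex.iCycles _ n), HomologicalComplex.cyclesMap_i, hzero,
        Limits.comp_zero, Limits.zero_comp]
    rw [← cancel_epi (HomologicalComplex.homologyπ _ n), HomologicalComplex.homologyπ_naturality,
      hcyc, Limits.comp_zero, Limits.zero_comp]
  rw [hmap, Limits.comp_zero, Limits.zero_comp]

theorem length_homology_tensorComplex_of_flat {n : ℕ} [QuasiIsoAt ρ n]
    (hW : ∀ i j, W.d i j = 0) (L : ModuleCat.{u} A) [Module.Flat A L] :
    Module.length A (((tensorComplex K).obj L).homology n) = Module.length A (L ⊗[A] W.X n) := by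
  have hiso : IsIso (HomologicalComplex.homologyMap ((tensorComplexMap ρ).app L) n) :=
    (quasiIsoAt_iff_isIso_homologyMap _ _).1
      (HomologicalComplex.quasiIsoAt_map_of_preservesHomology (i := n) ρ (tensorLeft L))
  have hd : ∀ i j, ((tensorComplex W).obj L).d i j = 0 := fun i j ↦ by
    change L ◁ W.d i j = 0
    rw [hW, MonoidalPreadditive.whiskerLeft_zero]
  let e := (asIso (HomologicalComplex.homologyMap ((tensorComplexMap ρ).app L) n)).trans
    (ShortComplex.LeftHomologyData.ofZeros (((tensorComplex W).obj L).sc n) (hd _ _)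
      (hd _ _)).homologyIso
  exact e.toLinearEquiv.length_eq

variable (K) in
theorem shortExact_homology_tensorComplex_succ [∀ i, Module.Flat A (K.X i)]
    {S : ShortComplex (ModuleCat.{u} A)} (hS : S.ShortExact) {n : ℕ}
    (hn : HomologicalComplex.homologyMap ((tensorComplex K).map S.f) n = 0)
    (hn' : HomologicalComplex.homologyMap ((tensorComplex K).map S.f) (n + 1) = 0) :
    (ShortComplex.mk _ _ ((tensorComplex_shortExact K hS).comp_δ (n + 1) n rfl)).ShortExact where
  exact := (tensorComplex_shortExact K hS).homology_exact₃ _ _ _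
  mono_f := ((tensorComplex_shortExact K hS).homology_exact₂ (n + 1)).mono_g hn'
  epi_g := ((tensorComplex_shortExact K hS).homology_exact₁ (n + 1) n rfl).epi_f hn

theorem isIso_homologyMap_tensorComplex_zero [∀ i, Module.Flat A (K.X i)]
    {S : ShortComplex (ModuleCat.{u} A)} (hS : S.ShortExact)
    (h0 : HomologicalComplex.homologyMap ((tensorComplex K).map S.f) 0 = 0) :
    IsIso (HomologicalComplex.homologyMap ((tensorComplex K).map S.g) 0) := by
  have hK := tensorComplex_shortExact K hS
  have : Mono (HomologicalComplex.homologyMap ((S.map (tensorComplex K)).g) 0) :=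
    (hK.homology_exact₂ 0).mono_g h0
  have : Epi ((S.map (tensorComplex K)).g) := hK.epi_g
  have : Epi (HomologicalComplex.homologyMap ((S.map (tensorComplex K)).g) 0) :=
    HomologicalComplex.epi_homologyMap_of_epi_of_not_rel _ _ (by simp)
  change IsIso (HomologicalComplex.homologyMap ((S.map (tensorComplex K)).g) 0)
  exact isIso_of_mono_of_epi _

end TensorHomology

section MinimalCover

variable {A : Type u} [CommRing A] [IsLocalRing A]

theorem exists_minimal_cover (M : Type v) [AddCommGroup M] [Module A M] [Module.Finite A M] :
    ∃ (b : ℕ) (p : (Fin b → A) →ₗ[A] M), Function.Surjective p ∧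
      LinearMap.ker p ≤ maximalIdeal A • ⊤ := by
  let e := Module.finBasis (ResidueField A) (ResidueField A ⊗[A] M)
  have hlift : ∀ y : ResidueField A ⊗[A] M, ∃ x : M, (1 : ResidueField A) ⊗ₜ[A] x = y := fun y ↦
    TensorProduct.mk_surjective A M _ residue_surjective y
  choose x hx using fun i ↦ hlift (e i)
  refine ⟨_, Fintype.linearCombination A x, ?_, fun c hc ↦ ?_⟩
  · rw [← LinearMap.range_eq_top, Fintype.range_linearCombination]
    exact span_eq_top_of_tmul_eq_basis x e hx
  · have hsum : ∑ i, residue A (c i) • e i = 0 := by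
      have := congrArg (fun y ↦ (1 : ResidueField A) ⊗ₜ[A] y) (LinearMap.mem_ker.1 hc)
      simpa [Fintype.linearCombination_apply, TensorProduct.tmul_sum, hx,
        IsScalarTower.algebraMap_smul (ResidueField A)] using! this
    have hmem : ∀ i, c i ∈ maximalIdeal A := fun i ↦ (residue_eq_zero_iff _).1
      (Fintype.linearIndependent_iff.1 e.linearIndependent _ hsum i)
    rw [pi_eq_sum_univ c]
    exact Submodule.sum_mem _ fun i _ ↦ Submodule.smul_mem_smul (hmem i) trivial

theorem length_tensorProduct_of_free (L N : Type*) [AddCommGroup L] [Module A L] [Module.Free A L]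
    [Module.Finite A L] [AddCommGroup N] [Module A N] :
    Module.length A (L ⊗[A] N) = Module.finrank A L * Module.length A N := by
  let e : L ⊗[A] N ≃ₗ[A] (Fin (Module.finrank A L) → N) :=
    (TensorProduct.congr (Module.finBasis A L).equivFun (LinearEquiv.refl A N)).trans
      ((TensorProduct.comm A _ _).trans (TensorProduct.piScalarRight A A N _))
  rw [e.length_eq, Module.length_pi_of_fintype, Finset.sum_const, Finset.card_fin, nsmul_eq_mul]

end MinimalCover

theorem smul_residueField_eq_zero {A : Type*} [CommRing A] [IsLocalRing A] {a : A}
    (ha : a ∈ maximalIdeal A) (x : ResidueField A) : a • x = 0 := by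
  rw [Algebra.smul_def, ResidueField.algebraMap_eq, (residue_eq_zero_iff a).2 ha, zero_mul]

section Tor

variable (A : Type u) [CommRing A] [IsLocalRing A]

/-- The length of `Tor_n^A(M, k)`, where `k` is the residue field of `A`. -/
noncomputable def torLength (M : Type u) [AddCommGroup M] [Module A M] (n : ℕ) : ℕ∞ :=
  Module.length A (((Tor (ModuleCat.{u} A) n).obj (ModuleCat.of A M)).obj
    (ModuleCat.of A (ResidueField A)))

variable {A} {K W : ChainComplex (ModuleCat.{u} A) ℕ} (ρ : K ⟶ W)

variable {L M : Type u} [AddCommGroup L] [Module A L] [Module.Free A L] [Module.Finite A L]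
  [AddCommGroup M] [Module A M] {p : L →ₗ[A] M}

theorem length_homology_tensorComplex_of_cover [∀ i, Module.Flat A (K.X i)]
    (hW : ∀ i j, W.d i j = 0) (hm : ∀ n, ∀ a ∈ maximalIdeal A, ∀ w : W.X n, a • w = 0)
    {N : ℕ} (hρ : ∀ i ≤ N, QuasiIsoAt ρ i)
    (hp : Function.Surjective p) (hker : LinearMap.ker p ≤ maximalIdeal A • ⊤) :
    Module.length A (((tensorComplex K).obj (ModuleCat.of A M)).homology 0) =
      Module.finrank A L * Module.length A (W.X 0) ∧
    ∀ n < N, Module.length A (((tensorComplex K).obj (ModuleCat.of A M)).homology (n + 1)) =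
      Module.finrank A L * Module.length A (W.X (n + 1)) +
      Module.length A (((tensorComplex K).obj (ModuleCat.of A (LinearMap.ker p))).homology n) := by
  let S := p.shortComplexKer
  have hS : S.ShortExact := LinearMap.shortExact_shortComplexKer hp
  have hmin : LinearMap.range S.f.hom ≤ maximalIdeal A • ⊤ :=
    (Submodule.range_subtype _).trans_le hker
  have hflat {n : ℕ} (hn : n ≤ N) :
      Module.length A (((tensorComplex K).obj S.X₂).homology n) =
        Module.finrank A L * Module.length A (W.X n) := by
    have := hρ n hn
    rw [length_homology_tensorComplex_of_flat ρ hW, length_tensorProduct_of_free]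
  have hzero {n : ℕ} (hn : n ≤ N) :
      HomologicalComplex.homologyMap ((tensorComplex K).map S.f) n = 0 :=
    have := hρ n hn
    homologyMap_tensorComplex_map_eq_zero ρ (hm n) hmin
  constructor
  · have := isIso_homologyMap_tensorComplex_zero hS (hzero (Nat.zero_le N))
    rw [← hflat (Nat.zero_le N)]
    exact (asIso (HomologicalComplex.homologyMap
      ((tensorComplex K).map S.g) 0)).toLinearEquiv.length_eq.symm
  · intro n hn
    have hses := shortExact_homology_tensorComplex_succ K hS (hzero hn.le) (hzero hn)
    rw [← hflat hn]
    exact Module.length_eq_add_of_exact _ _ hses.moduleCat_injective_f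
      hses.moduleCat_surjective_g
      ((ShortComplex.ShortExact.moduleCat_exact_iff_function_exact _).1 hses.exact)

variable (A) in
theorem length_residueField : Module.length A (ResidueField A) = 1 :=
  (Module.length_eq_of_surjective (R := ResidueField A) residue_surjective).trans
    (Module.length_eq_one _ _)

theorem smul_single₀_eq_zero {a : A} (ha : a ∈ maximalIdeal A) (n : ℕ)
    (w : ((ChainComplex.single₀ (ModuleCat.{u} A)).obj (ModuleCat.of A (ResidueField A))).X n) :
    a • w = 0 := by
  cases n with
  | zero =>
    exact smul_residueField_eq_zero ha w
  | succ n =>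
    have := ModuleCat.isZero_iff_subsingleton.1 (HomologicalComplex.isZero_single_obj_X
      (ComplexShape.down ℕ) 0 (ModuleCat.of A (ResidueField A)) (n + 1) n.succ_ne_zero)
    exact Subsingleton.elim _ _

theorem smul_torObj_eq_zero (M : ModuleCat.{u} A) (n : ℕ) {a : A} (ha : a ∈ maximalIdeal A)
    (x : ((Tor (ModuleCat.{u} A) n).obj M).obj (ModuleCat.of A (ResidueField A))) :
    a • x = 0 := by
  let P := projectiveResolution (ModuleCat.of A (ResidueField A))
  have hlift : (a • 𝟙 P.complex) ≫ P.π = 0 := by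
    refine HomologicalComplex.hom_ext _ _ fun n ↦ ModuleCat.hom_ext (LinearMap.ext fun y ↦ ?_)
    exact (map_smul (P.π.f n).hom a y).trans (smul_single₀_eq_zero ha n _)
  have hhom := ((tensorLeft M).mapHomotopy (ProjectiveResolution.liftHomotopyZero _ hlift))
  have hmap : ((tensorLeft M).mapHomologicalComplex (ComplexShape.down ℕ)).map (a • 𝟙 P.complex) =
     a • 𝟙 (((tensorLeft M).mapHomologicalComplex _).obj P.complex) := by
    refine HomologicalComplex.hom_ext _ _ fun i ↦ ?_
    have h := Functor.Linear.map_smul (F := tensorLeft M) (𝟙 (P.complex.X i)) a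
    rw [(tensorLeft M).map_id] at h
    exact h
  have hzero := hhom.homologyMap_eq n
  have hsmul := ShortComplex.homologyMap_smul
    (𝟙 ((((tensorLeft M).mapHomologicalComplex (ComplexShape.down ℕ)).obj P.complex).sc n)) a
  rw [ShortComplex.homologyMap_id] at hsmul
  rw [hmap, Functor.map_zero, HomologicalComplex.homologyMap_zero] at hzero
  let e : ((Tor (ModuleCat.{u} A) n).obj M).obj (ModuleCat.of A (ResidueField A)) ≃ₗ[A]
      ((tensorComplex P.complex).obj M).homology n :=
    (P.isoLeftDerivedObj (tensorLeft M) n).toLinearEquiv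
  rw [← e.map_eq_zero_iff, map_smul]
  exact congr($(hsmul.symm.trans hzero) (e x))

instance (P : ProjectiveResolution (ModuleCat.of A (ResidueField A))) (n : ℕ) :
    Module.Flat A (P.complex.X n) :=
  have : Module.Projective A (P.complex.X n) :=
    (IsProjective.iff_projective (P.complex.X n)).2 (P.projective n)
  inferInstance

theorem torLength_of_cover (hp : Function.Surjective p)
    (hker : LinearMap.ker p ≤ maximalIdeal A • ⊤) :
    torLength A M 0 = Module.finrank A L ∧
      ∀ n, torLength A M (n + 1) = torLength A (LinearMap.ker p) n := by
  let k := ModuleCat.of A (ResidueField A)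
  let P := projectiveResolution k
  have htor (N : Type u) [AddCommGroup N] [Module A N] (n : ℕ) : torLength A N n =
      Module.length A (((tensorComplex P.complex).obj (ModuleCat.of A N)).homology n) :=
    (P.isoLeftDerivedObj (tensorLeft (ModuleCat.of A N)) n).toLinearEquiv.length_eq
  have hcover (N : ℕ) := length_homology_tensorComplex_of_cover P.π
    (HomologicalComplex.single_obj_d _ _ _) (fun n _ ha w ↦ smul_single₀_eq_zero ha n w)
    (N := N) (fun _ _ ↦ inferInstance) hp hker
  have hlen : ∀ n, Module.length A (((ChainComplex.single₀ (ModuleCat.{u} A)).obj k).X n) =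
      if n = 0 then 1 else 0 := by
    rintro (_ | n)
    · exact length_residueField A
    · exact Module.length_eq_zero_iff.2 (ModuleCat.isZero_iff_subsingleton.1
        (HomologicalComplex.isZero_single_obj_X _ 0 k (n + 1) n.succ_ne_zero))
  simp only [hlen, ← htor] at hcover
  exact ⟨by simpa using (hcover 0).1, fun n ↦ by simpa using (hcover (n + 1)).2 n n.lt_succ_self⟩

theorem torLength_ne_top [IsNoetherianRing A] (M : Type u) [AddCommGroup M]
    [Module A M] [Module.Finite A M] (n : ℕ) : torLength A M n ≠ ⊤ := by
  induction n generalizing M with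
  | zero =>
    obtain ⟨b, p, hp, hker⟩ := exists_minimal_cover (A := A) M
    rw [(torLength_of_cover hp hker).1]
    exact ENat.natCast_ne_top _
  | succ n ih =>
    obtain ⟨b, p, hp, hker⟩ := exists_minimal_cover (A := A) M
    rw [(torLength_of_cover hp hker).2]
    exact ih _

theorem length_homology_tensorComplex [IsNoetherianRing A] [∀ i, Module.Flat A (K.X i)]
    (hW : ∀ i j, W.d i j = 0) (hm : ∀ n, ∀ a ∈ maximalIdeal A, ∀ w : W.X n, a • w = 0)
    {N : ℕ} (hρ : ∀ i ≤ N, QuasiIsoAt ρ i) (M : Type u) [AddCommGroup M]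
    [Module A M] [Module.Finite A M] {n : ℕ} (hn : n ≤ N) :
    Module.length A (((tensorComplex K).obj (ModuleCat.of A M)).homology n) =
      ∑ ij ∈ antidiagonal n, Module.length A (W.X ij.1) * torLength A M ij.2 := by
  induction n generalizing M with
  | zero =>
    obtain ⟨b, p, hp, hker⟩ := exists_minimal_cover (A := A) M
    rw [(length_homology_tensorComplex_of_cover ρ hW hm hρ hp hker).1,
      Finset.Nat.antidiagonal_zero, Finset.sum_singleton, (torLength_of_cover hp hker).1, mul_comm]
  | succ n ih =>
    obtain ⟨b, p, hp, hker⟩ := exists_minimal_cover (A := A) M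
    obtain ⟨htor_zero, htor_succ⟩ := torLength_of_cover hp hker
    rw [Finset.Nat.sum_antidiagonal_succ',
      (length_homology_tensorComplex_of_cover ρ hW hm hρ hp hker).2 n hn]
    simp only [htor_zero, htor_succ]
    rw [← ih _ (Nat.le_of_succ_le hn), mul_comm]

theorem finrank_residueField_tensorProduct_of_smul_eq_zero (T : Type*) [AddCommGroup T] [Module A T]
    (hT : ∀ a ∈ maximalIdeal A, ∀ x : T, a • x = 0) :
    Module.finrank (ResidueField A) (ResidueField A ⊗[A] T) = (Module.length A T).toNat := by
  have hbot : maximalIdeal A • (⊤ : Submodule A T) = ⊥ :=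
    le_bot_iff.1 (Submodule.smul_le.2 fun a ha x _ ↦ hT a ha x)
  let e : ResidueField A ⊗[A] T ≃ₗ[A] T :=
    (TensorProduct.quotTensorEquivQuotSMul T (maximalIdeal A)).trans
      (Submodule.quotEquivOfEqBot _ hbot)
  have hlen : Module.length A (ResidueField A ⊗[A] T) =
      Module.length (ResidueField A) (ResidueField A ⊗[A] T) :=
    Module.length_eq_of_surjective residue_surjective
  rw [← e.length_eq, hlen, Module.length_eq_rank]
  rfl

end Tor

theorem bettiNumber_eq_toNat_torLength (A : Type) [CommRing A] [IsLocalRing A] (M : Type)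
    [AddCommGroup M] [Module A M] (n : ℕ) : bettiNumber A M n = (torLength A M n).toNat :=
  finrank_residueField_tensorProduct_of_smul_eq_zero _
    fun _ ha x ↦ smul_torObj_eq_zero (ModuleCat.of A M) n ha x

section HomologyLength

variable {A X Y Z X' Y' Z' : Type*} [CommRing A] [AddCommGroup X] [Module A X] [AddCommGroup Y]
  [Module A Y] [AddCommGroup Z] [Module A Z] [AddCommGroup X'] [Module A X'] [AddCommGroup Y']
  [Module A Y'] [AddCommGroup Z'] [Module A Z']

/-- The length of the homology at `Y` of `X → Y → Z`. The composition need not be zero: the range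
of `f` is intersected with the kernel of `g`. -/
noncomputable def homologyLength (f : X →ₗ[A] Y) (g : Y →ₗ[A] Z) : ℕ∞ :=
  Module.length A (LinearMap.ker g ⧸ (LinearMap.range f).submoduleOf (LinearMap.ker g))

theorem homologyLength_eq_of_surjective {f : X →ₗ[A] Y} {g : Y →ₗ[A] Z} {T : Type*}
    [AddCommGroup T] [Module A T] (π : LinearMap.ker g →ₗ[A] T) (hπ : Function.Surjective π)
    (hker : ∀ y, π y = 0 ↔ ∃ x, f x = y) : homologyLength f g = Module.length A T :=
  ((Submodule.quotEquivOfEq _ _ (Submodule.ext fun y ↦ (hker y).symm)).trans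
    (π.quotKerEquivOfSurjective hπ)).length_eq

theorem mkQ_submoduleOf_eq_zero_iff {f : X →ₗ[A] Y} {g : Y →ₗ[A] Z} (y : LinearMap.ker g) :
    ((LinearMap.range f).submoduleOf (LinearMap.ker g)).mkQ y = 0 ↔ ∃ x, f x = y :=
  Submodule.Quotient.mk_eq_zero _

theorem homologyLength_congr {f : X →ₗ[A] Y} {g : Y →ₗ[A] Z} {f' : X' →ₗ[A] Y'}
    {g' : Y' →ₗ[A] Z'} (e₁ : X ≃ₗ[A] X') (e₂ : Y ≃ₗ[A] Y') (hf : ∀ x, e₂ (f x) = f' (e₁ x))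
    (hg : ∀ y, g' (e₂ y) = 0 ↔ g y = 0) : homologyLength f g = homologyLength f' g' := by
  refine homologyLength_eq_of_surjective (Submodule.mkQ _ ∘ₗ
    e₂.toLinearMap.restrict fun y hy ↦ (hg y).2 hy) ?_ fun y ↦ ?_
  · refine (Submodule.mkQ_surjective _).comp fun y ↦ ⟨⟨e₂.symm y, ?_⟩, ?_⟩
    · exact (hg _).1 ((congrArg g' (e₂.apply_symm_apply y)).trans y.2)
    · exact Subtype.ext (e₂.apply_symm_apply y)
  · rw [LinearMap.comp_apply, mkQ_submoduleOf_eq_zero_iff]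
    refine (e₁.surjective.exists.trans (exists_congr fun x ↦ ?_))
    rw [← hf]
    exact e₂.injective.eq_iff

theorem homologyLength_prodMap (f : X →ₗ[A] Y) (g : Y →ₗ[A] Z) (f' : X' →ₗ[A] Y')
    (g' : Y' →ₗ[A] Z') : homologyLength (f.prodMap f') (g.prodMap g') =
      homologyLength f g + homologyLength f' g' := by
  let p : LinearMap.ker (g.prodMap g') →ₗ[A] LinearMap.ker g :=
    (LinearMap.fst A Y Y').restrict fun _ hy ↦ congr($hy.1)
  let p' : LinearMap.ker (g.prodMap g') →ₗ[A] LinearMap.ker g' :=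
    (LinearMap.snd A Y Y').restrict fun _ hy ↦ congr($hy.2)
  refine (homologyLength_eq_of_surjective
    ((Submodule.mkQ _ ∘ₗ p).prod (Submodule.mkQ _ ∘ₗ p')) ?_ fun y ↦ ?_).trans
      (Module.length_prod _ _ _)
  · rintro ⟨y, y'⟩
    obtain ⟨y, rfl⟩ := Submodule.mkQ_surjective _ y
    obtain ⟨y', rfl⟩ := Submodule.mkQ_surjective _ y'
    exact ⟨⟨(y, y'), Prod.ext y.2 y'.2⟩, rfl⟩
  · rw [LinearMap.prod_apply, Prod.mk_eq_zero]
    refine (and_congr (mkQ_submoduleOf_eq_zero_iff _) (mkQ_submoduleOf_eq_zero_iff _)).trans ?_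
    exact ⟨fun ⟨⟨x, hx⟩, x', hx'⟩ ↦ ⟨(x, x'), Prod.ext hx hx'⟩,
      fun ⟨x, hx⟩ ↦ ⟨⟨x.1, congr($hx.1)⟩, x.2, congr($hx.2)⟩⟩

theorem homologyLength_eq_zero [Subsingleton Y] (f : X →ₗ[A] Y) (g : Y →ₗ[A] Z) :
    homologyLength f g = 0 :=
  Module.length_eq_zero

theorem homologyLength_restrictScalars {R : Type*} [CommRing R] [Algebra A R] [Module R X]
    [Module R Y] [Module R Z] [IsScalarTower A R X] [IsScalarTower A R Y] [IsScalarTower A R Z]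
    (hR : Function.Surjective (algebraMap A R)) (f : X →ₗ[R] Y) (g : Y →ₗ[R] Z) :
    homologyLength (f.restrictScalars A) (g.restrictScalars A) = homologyLength f g :=
  (Submodule.Quotient.restrictScalarsEquiv A
    ((LinearMap.range f).submoduleOf (LinearMap.ker g))).length_eq.trans
    (Module.length_eq_of_surjective hR)

end HomologyLength

section ModuleCatHomology

variable {A : Type u} [CommRing A]

theorem length_shortComplex_homology (S : ShortComplex (ModuleCat.{u} A)) :
    Module.length A S.homology = homologyLength S.f.hom S.g.hom := by
  rw [S.moduleCatHomologyIso.toLinearEquiv.length_eq]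
  refine (homologyLength_eq_of_surjective (LinearMap.range S.moduleCatToCycles).mkQ
    (Submodule.mkQ_surjective _) fun y ↦ ?_).symm
  exact (Submodule.Quotient.mk_eq_zero _).trans (exists_congr fun x ↦ Subtype.ext_iff)

theorem quasiIso_of_zero_target {S T : ShortComplex (ModuleCat.{u} A)} (ρ : S ⟶ T) (hf : T.f = 0)
    (hg : T.g = 0) (inj : ∀ x, S.g x = 0 → ρ.τ₂ x = 0 → ∃ y, S.f y = x)
    (surj : ∀ w, ∃ x, S.g x = 0 ∧ ρ.τ₂ x = w) : ShortComplex.QuasiIso ρ := by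
  have τ₂_comp : ∀ y, ρ.τ₂ (S.f y) = 0 := fun y ↦ by
    have := congr($(ρ.comm₁₂) y)
    rw [hf] at this
    exact this.symm
  let ρH : LinearMap.ker S.g.hom ⧸ LinearMap.range S.moduleCatToCycles →ₗ[A] T.X₂ :=
    Submodule.liftQ _ (ρ.τ₂.hom ∘ₗ (LinearMap.ker S.g.hom).subtype) (by
      rintro _ ⟨y, rfl⟩
      exact τ₂_comp y)
  let γ : ShortComplex.LeftHomologyMapData ρ S.moduleCatLeftHomologyData
      (ShortComplex.LeftHomologyData.ofZeros T hf hg) :=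
    { φK := ModuleCat.ofHom (ρ.τ₂.hom ∘ₗ (LinearMap.ker S.g.hom).subtype)
      φH := ModuleCat.ofHom ρH
      commi := rfl
      commf' := by
        rw [ShortComplex.LeftHomologyData.ofZeros_f', Limits.comp_zero]
        exact ModuleCat.hom_ext (LinearMap.ext τ₂_comp)
      commπ := rfl }
  rw [γ.quasiIso_iff, ConcreteCategory.isIso_iff_bijective]
  refine ⟨(injective_iff_map_eq_zero ρH).2 fun h hh ↦ ?_, fun w ↦ ?_⟩
  · obtain ⟨⟨x, hx⟩, rfl⟩ := Submodule.mkQ_surjective _ h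
    obtain ⟨y, rfl⟩ := inj x hx hh
    exact (Submodule.Quotient.mk_eq_zero _).2 ⟨y, rfl⟩
  · obtain ⟨x, hx, rfl⟩ := surj w
    exact ⟨Submodule.Quotient.mk ⟨x, hx⟩, rfl⟩

end ModuleCatHomology

section ChainComplexHomology

variable {A : Type u} [CommRing A]

theorem down_next (n : ℕ) : (ComplexShape.down ℕ).next n = n - 1 := by
  cases n with
  | zero => exact ChainComplex.next_nat_zero
  | succ n => exact ChainComplex.next_nat_succ n

theorem length_homology (K : ChainComplex (ModuleCat.{u} A) ℕ) (n : ℕ) :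
    Module.length A (K.homology n) =
      homologyLength (K.d (n + 1) n).hom (K.d n (n - 1)).hom :=
  (ShortComplex.homologyMapIso (K.isoSc' (n + 1) n (n - 1) (ChainComplex.prev ℕ n)
    (down_next n))).toLinearEquiv.length_eq.trans
      (length_shortComplex_homology (K.sc' (n + 1) n (n - 1)))

end ChainComplexHomology

theorem one_tmul_eq_zero_iff {A R P : Type*} [CommRing A] [CommRing R] [Algebra A R]
    [AddCommGroup P] [Module A P] {f : A} (hR : Function.Surjective (algebraMap A R))
    (hker : RingHom.ker (algebraMap A R) = Ideal.span {f}) {x : P} :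
    (1 : R) ⊗ₜ[A] x = 0 ↔ ∃ y, x = f • y := by
  have hexact : Function.Exact (LinearMap.mulRight A f) (Algebra.linearMap A R) := fun a ↦ by
    change a ∈ RingHom.ker (algebraMap A R) ↔ _
    rw [hker, Ideal.mem_span_singleton']
    rfl
  rw [← map_one (algebraMap A R)]
  refine (rTensor_exact P hexact hR ((1 : A) ⊗ₜ x)).trans ?_
  constructor
  · rintro ⟨t, ht⟩
    obtain ⟨y, rfl⟩ := TensorProduct.mk_surjective A P A (fun a ↦ ⟨a, rfl⟩) t
    refine ⟨y, ?_⟩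
    simpa using congr(TensorProduct.lid A P $ht).symm
  · rintro ⟨y, rfl⟩
    exact ⟨1 ⊗ₜ y, by simp [TensorProduct.smul_tmul']⟩

/-- A graded module, free in each degree, together with an endomorphism of degree `-1` whose square
is divisible by `f`. It becomes a chain complex over every algebra in which `f` vanishes. -/
structure CurvedComplex (A : Type u) [CommRing A] (f : A) where
  carrier : Type u
  [addCommGroup : AddCommGroup carrier]
  [module : Module A carrier]
  gr : ℤ → Submodule A carrier
  free_gr (n : ℤ) : Module.Free A (gr n)
  gr_of_neg (n : ℤ) (hn : n < 0) : gr n = ⊥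
  d : carrier →ₗ[A] carrier
  d_mem {n : ℤ} {x : carrier} (hx : x ∈ gr n) : d x ∈ gr (n - 1)
  exists_d_d_eq {n : ℤ} {x : carrier} (hx : x ∈ gr n) : ∃ y ∈ gr (n - 2), d (d x) = f • y

namespace CurvedComplex

attribute [instance] addCommGroup module free_gr

variable {A : Type u} [CommRing A] {f : A} (X : CurvedComplex A f)

theorem subsingleton_gr {n : ℤ} (hn : n < 0) : Subsingleton (X.gr n) := by
  rw [X.gr_of_neg n hn]
  infer_instance

/-- The differential from degree `i` to degree `j`. -/
noncomputable def dOn {i j : ℤ} (h : j + 1 = i) : X.gr i →ₗ[A] X.gr j :=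
  X.d.restrict fun x hx ↦ by
    obtain rfl : j = i - 1 := by omega
    exact X.d_mem hx

theorem exists_dOn_dOn_eq {i j k : ℤ} (h : j + 1 = i) (h' : k + 1 = j) (x : X.gr i) :
    ∃ y, X.dOn h' (X.dOn h x) = f • y := by
  obtain ⟨y, hy, hxy⟩ := X.exists_d_d_eq x.2
  obtain rfl : k = i - 2 := by omega
  exact ⟨⟨y, hy⟩, Subtype.ext hxy⟩

section BaseChange

variable (R : Type u) [CommRing R] [Algebra A R] (hf : algebraMap A R f = 0)

/-- The chain complex `R ⊗ X`, for an algebra `R` in which `f` vanishes. -/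
noncomputable def baseChange : ChainComplex (ModuleCat.{u} R) ℕ :=
  ChainComplex.of (fun n ↦ ModuleCat.of R (R ⊗[A] X.gr n))
    (fun n ↦ ModuleCat.ofHom ((X.dOn (Nat.cast_succ n).symm).baseChange R)) fun n ↦ by
      refine ModuleCat.hom_ext (TensorProduct.AlgebraTensorModule.ext fun r x ↦ ?_)
      obtain ⟨y, hy⟩ := X.exists_dOn_dOn_eq (Nat.cast_succ (n + 1)).symm (Nat.cast_succ n).symm x
      change r ⊗ₜ[A] X.dOn _ (X.dOn _ x) = 0
      rw [hy, TensorProduct.tmul_smul, TensorProduct.smul_tmul', Algebra.smul_def, hf, zero_mul,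
        TensorProduct.zero_tmul]

instance (n : ℕ) : Module.Flat R ((X.baseChange R hf).X n) :=
  inferInstanceAs (Module.Flat R (R ⊗[A] X.gr n))

theorem baseChange_d (n : ℕ) : (X.baseChange R hf).d (n + 1) n =
    ModuleCat.ofHom ((X.dOn (Nat.cast_succ n).symm).baseChange R) :=
  ChainComplex.of_d (fun n : ℕ ↦ ModuleCat.of R (R ⊗[A] X.gr n))
    (fun n ↦ ModuleCat.ofHom ((X.dOn (Nat.cast_succ n).symm).baseChange R)) n

theorem baseChange_d_one_tmul_eq_zero_iff (hR : Function.Surjective (algebraMap A R))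
    (hker : RingHom.ker (algebraMap A R) = Ideal.span {f}) {n : ℕ} (x : X.gr n) :
    (X.baseChange R hf).d n (n - 1) (1 ⊗ₜ[A] x) = 0 ↔ ∃ y ∈ X.gr (n - 1), X.d x = f • y := by
  cases n with
  | zero =>
    rw [(X.baseChange R hf).shape _ _ (by simp)]
    have hdx := X.d_mem x.2
    rw [X.gr_of_neg _ (by norm_num), Submodule.mem_bot] at hdx
    exact iff_of_true rfl ⟨0, zero_mem _, by rw [hdx, smul_zero]⟩
  | succ n =>
    have : (n + 1 : ℕ) - 1 = (n : ℤ) := by simp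
    rw [Nat.add_sub_cancel, baseChange_d, this]
    refine (one_tmul_eq_zero_iff hR hker).trans ?_
    exact ⟨fun ⟨y, hy⟩ ↦ ⟨y, y.2, congr(Subtype.val $hy)⟩,
      fun ⟨y, hy, hxy⟩ ↦ ⟨⟨y, hy⟩, Subtype.ext hxy⟩⟩

end BaseChange

section TensorHomology

variable (M : Type*) [AddCommGroup M] [Module A M]

/-- The length of the homology of `M ⊗ X` in degree `n`. -/
noncomputable def tensorHomologyLength (n : ℤ) : ℕ∞ :=
  homologyLength ((X.dOn (i := n + 1) rfl).lTensor M) ((X.dOn (sub_add_cancel n 1)).lTensor M)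

theorem tensorHomologyLength_eq {i j k : ℤ} (h : j + 1 = i) (h' : k + 1 = j) :
    X.tensorHomologyLength M j =
      homologyLength ((X.dOn h).lTensor M) ((X.dOn h').lTensor M) := by
  subst h
  obtain rfl : k = j - 1 := by omega
  rfl

theorem tensorHomologyLength_of_neg {n : ℤ} (hn : n < 0) : X.tensorHomologyLength M n = 0 :=
  have := X.subsingleton_gr hn
  have : Subsingleton (M ⊗[A] X.gr n) := inferInstance
  homologyLength_eq_zero _ _

variable {R M' : Type u} [CommRing R] [Algebra A R] (hf : algebraMap A R f = 0)
  [AddCommGroup M'] [Module A M'] [Module R M'] [IsScalarTower A R M']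

theorem cancelBaseChange_lTensor_dOn {i j : ℤ} (h : j + 1 = i) (x : M' ⊗[R] (R ⊗[A] X.gr i)) :
    AlgebraTensorModule.cancelBaseChange A R R M' (X.gr j)
        (((X.dOn h).baseChange R).lTensor M' x) =
      (X.dOn h).lTensor M' (AlgebraTensorModule.cancelBaseChange A R R M' (X.gr i) x) := by
  induction x with
  | zero => simp only [map_zero]
  | add x y hx hy => simp only [map_add, hx, hy]
  | tmul m y =>
    induction y with
    | zero => simp only [TensorProduct.tmul_zero, map_zero]
    | add x y hx hy => simp only [TensorProduct.tmul_add, map_add, hx, hy]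
    | tmul r y => rfl

variable (M') in
theorem length_homology_tensorComplex_baseChange (hR : Function.Surjective (algebraMap A R))
    (n : ℕ) : Module.length R (((tensorComplex (X.baseChange R hf)).obj
      (ModuleCat.of R M')).homology n) = X.tensorHomologyLength M' n := by
  let K := (tensorComplex (X.baseChange R hf)).obj (ModuleCat.of R M')
  let e (i : ℤ) : M' ⊗[R] (R ⊗[A] X.gr i) ≃ₗ[R] M' ⊗[A] X.gr i :=
    AlgebraTensorModule.cancelBaseChange A R R M' (X.gr i)
  have K_d (n : ℕ) : (K.d (n + 1) n).hom =
      ((X.dOn (Nat.cast_succ n).symm).baseChange R).lTensor M' :=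
    congr(ModuleCat.Hom.hom (ModuleCat.of R M' ◁ $(X.baseChange_d R hf n)))
  have K_d_eq_zero_iff {k : ℤ} (h : k + 1 = n) (x : M' ⊗[R] (R ⊗[A] X.gr n)) :
      (X.dOn h).lTensor M' (e n x) = 0 ↔ (K.d n (n - 1)).hom x = 0 := by
    cases n with
    | zero =>
      obtain rfl : k = -1 := by simpa [eq_neg_iff_add_eq_zero] using h
      have : Subsingleton (X.gr (-1)) := X.subsingleton_gr (by norm_num)
      rw [K.shape _ _ (by simp)]
      exact iff_of_true (Subsingleton.elim _ _) rfl
    | succ n =>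
      obtain rfl : k = n := by simpa using h
      rw [← X.cancelBaseChange_lTensor_dOn, LinearEquiv.map_eq_zero_iff, ← K_d]
      rfl
  rw [length_homology, X.tensorHomologyLength_eq M' (Nat.cast_succ n).symm (sub_add_cancel _ 1),
    K_d]
  exact (homologyLength_congr (f' := AlgebraTensorModule.lTensor R M' (X.dOn _))
    (g' := AlgebraTensorModule.lTensor R M' (X.dOn _)) (e _) (e _)
    (X.cancelBaseChange_lTensor_dOn _) (K_d_eq_zero_iff _)).trans
    (homologyLength_restrictScalars hR _ _).symm

end TensorHomology

section Detection

variable [IsLocalRing A] {J : Type}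

/-- The functionals `c j` on `X`, of degrees `deg j`, induce a basis of the dual of the homology of
`X` modulo `f` in degrees at most `N`, when this homology is at most one-dimensional in each
degree. -/
structure DetectsHomology (c : J → X.carrier →ₗ[A] ResidueField A) (deg : J → ℕ) (N : ℕ) :
    Prop where
  deg_injective : Function.Injective deg
  apply_d (j : J) {x : X.carrier} (hx : x ∈ X.gr (deg j + 1)) : c j (X.d x) = 0
  exists_d_eq {n : ℕ} (hn : n ≤ N) {x y : X.carrier} (hx : x ∈ X.gr n) (hy : y ∈ X.gr (n - 1))
    (hdx : X.d x = f • y) (hcx : ∀ j, deg j = n → c j x = 0) : ∃ p ∈ X.gr (n + 1), X.d p = x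
  exists_apply_ne_zero (j : J) (hj : deg j ≤ N) : ∃ z ∈ X.gr (deg j), X.d z = 0 ∧ c j z ≠ 0

variable (R : Type u) [CommRing R] [IsLocalRing R]

/-- The complex with zero differential and one copy of the residue field in degree `deg j` for
each `j`. -/
noncomputable def residueComplex (deg : J → ℕ) : ChainComplex (ModuleCat.{u} R) ℕ where
  X n := ModuleCat.of R ({j // deg j = n} → ResidueField R)
  d _ _ := 0

variable {R} [Algebra A R] [IsLocalHom (algebraMap A R)] (hf : algebraMap A R f = 0)

variable {X} {c : J → X.carrier →ₗ[A] ResidueField A} {deg : J → ℕ} {N : ℕ}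

/-- The values of the functionals `c j` in degree `n`. -/
noncomputable def residueMap (X : CurvedComplex A f) (c : J → X.carrier →ₗ[A] ResidueField A)
    (deg : J → ℕ) (n : ℕ) : R ⊗[A] X.gr n →ₗ[R] {j // deg j = n} → ResidueField R :=
  LinearMap.pi fun j ↦ LinearMap.liftBaseChange R
    ((IsScalarTower.toAlgHom A (ResidueField A) (ResidueField R)).toLinearMap ∘ₗ c j ∘ₗ
      (X.gr n).subtype)

theorem residueMap_tmul (n : ℕ) (r : R) (x : X.gr n) (j : {j // deg j = n}) :
    residueMap X c deg n (r ⊗ₜ[A] x) j =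
      r • algebraMap (ResidueField A) (ResidueField R) (c j x) := rfl

theorem DetectsHomology.residueMap_baseChange_dOn (hc : X.DetectsHomology c deg N) (n : ℕ) :
    residueMap X c deg n ∘ₗ (X.dOn (Nat.cast_succ n).symm).baseChange R = 0 := by
  refine TensorProduct.AlgebraTensorModule.ext fun r x ↦ funext fun ⟨j, hj⟩ ↦ ?_
  subst hj
  change residueMap X c deg _ (r ⊗ₜ X.dOn _ x) _ = 0
  rw [residueMap_tmul, dOn, LinearMap.coe_restrict_apply, hc.apply_d j x.2, map_zero, smul_zero]

/-- The map of complexes formed by the values of the functionals `c j`. -/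
noncomputable def DetectsHomology.toResidueComplex (hc : X.DetectsHomology c deg N) :
    X.baseChange R hf ⟶ residueComplex R deg where
  f n := ModuleCat.ofHom (residueMap X c deg n)
  comm' := by
    rintro _ n rfl
    rw [baseChange_d]
    exact Limits.comp_zero.trans (ModuleCat.hom_ext (hc.residueMap_baseChange_dOn n)).symm

theorem DetectsHomology.quasiIsoAt (hc : X.DetectsHomology c deg N)
    (hR : Function.Surjective (algebraMap A R))
    (hker : RingHom.ker (algebraMap A R) = Ideal.span {f}) {n : ℕ} (hn : n ≤ N) :
    QuasiIsoAt (hc.toResidueComplex hf) n := by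
  rw [quasiIsoAt_iff' _ (n + 1) n (n - 1) (ChainComplex.prev ℕ n) (down_next n)]
  refine quasiIso_of_zero_target _ rfl rfl (fun x hdx hx ↦ ?_) fun w ↦ ?_
  · obtain ⟨x, rfl⟩ := TensorProduct.mk_surjective A (X.gr n) R hR x
    obtain ⟨y, hy, hxy⟩ : ∃ y ∈ X.gr (n - 1), X.d x = f • y :=
      (X.baseChange_d_one_tmul_eq_zero_iff R hf hR hker x).1 hdx
    obtain ⟨p, hp, hpx⟩ := hc.exists_d_eq hn x.2 hy hxy fun j hj ↦ by
      have := congr($hx ⟨j, hj⟩)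
      change residueMap X c deg _ (1 ⊗ₜ x) _ = 0 at this
      rwa [residueMap_tmul, one_smul, FaithfulSMul.algebraMap_eq_zero_iff] at this
    refine ⟨1 ⊗ₜ ⟨p, by exact_mod_cast hp⟩, ?_⟩
    exact congr($(X.baseChange_d R hf n) _).trans congr(1 ⊗ₜ[A] $(Subtype.ext hpx))
  · by_cases hempty : IsEmpty {j // deg j = n}
    · exact ⟨0, map_zero _, Subsingleton.elim (α := {j // deg j = n} → ResidueField R) _ _⟩
    obtain ⟨j, rfl⟩ := not_isEmpty_iff.1 hempty
    obtain ⟨z, hz, hdz, hcz⟩ := hc.exists_apply_ne_zero j hn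
    obtain ⟨a, ha⟩ := (residue_surjective.comp hR)
      (w ⟨j, rfl⟩ / algebraMap (ResidueField A) (ResidueField R) (c j z))
    refine ⟨1 ⊗ₜ ⟨a • z, Submodule.smul_mem _ a hz⟩, ?_, funext fun ⟨i, hi⟩ ↦ ?_⟩
    · refine (X.baseChange_d_one_tmul_eq_zero_iff R hf hR hker _).2 ⟨0, zero_mem _, ?_⟩
      rw [map_smul, hdz, smul_zero, smul_zero]
    · obtain rfl := hc.deg_injective hi
      change residueMap X c deg _ (1 ⊗ₜ _) _ = _
      rw [residueMap_tmul, one_smul, map_smul, Algebra.smul_def, map_mul,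
        ← IsScalarTower.algebraMap_apply, IsScalarTower.algebraMap_apply A R]
      exact (congrArg (· * _) ha).trans (div_mul_cancel₀ _ (by simpa using hcz))

theorem DetectsHomology.tensorHomologyLength_eq (hc : X.DetectsHomology c deg N)
    [IsNoetherianRing R] (hR : Function.Surjective (algebraMap A R))
    (hker : RingHom.ker (algebraMap A R) = Ideal.span {f}) (M : Type u) [AddCommGroup M]
    [Module A M] [Module R M] [IsScalarTower A R M] [Module.Finite R M] {n : ℕ} (hn : n ≤ N) :
    X.tensorHomologyLength M n = ∑ ij ∈ antidiagonal n,
      ENat.card {j // deg j = ij.1} * torLength R M ij.2 := by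
  have hf : algebraMap A R f = 0 := by
    rw [← RingHom.mem_ker, hker]
    exact Ideal.mem_span_singleton_self f
  have hm (n : ℕ) (a) (ha : a ∈ maximalIdeal R) (w : (residueComplex R deg).X n) : a • w = 0 :=
    funext fun j ↦ smul_residueField_eq_zero ha (w j)
  have hlength (n : ℕ) :
      Module.length R ((residueComplex R deg).X n) = ENat.card {j // deg j = n} := by
    refine Module.length_pi.trans ?_
    rw [length_residueField, mul_one]
  rw [← X.length_homology_tensorComplex_baseChange M hf hR]
  refine (length_homology_tensorComplex (hc.toResidueComplex hf) (fun _ _ ↦ rfl) hm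
    (fun i hi ↦ hc.quasiIsoAt hf hR hker hi) M hn).trans ?_
  simp only [hlength]

end Detection

end CurvedComplex

section ExactPair

variable {A : Type*} [CommRing A]

/-- Exact pairs of zerodivisors. The two elements may vanish, so that `(0, 1)` is an exact pair. -/
structure IsExactPair (f g : A) : Prop where
  mul_left_eq_zero_iff : ∀ x, x * f = 0 ↔ x ∈ Ideal.span {g}
  mul_right_eq_zero_iff : ∀ x, x * g = 0 ↔ x ∈ Ideal.span {f}

namespace IsExactPair

variable {f g : A}

theorem symm (h : IsExactPair f g) : IsExactPair g f :=
  ⟨h.mul_right_eq_zero_iff, h.mul_left_eq_zero_iff⟩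

theorem mul_eq_zero (h : IsExactPair f g) : f * g = 0 := by
  rw [h.mul_right_eq_zero_iff]
  exact Ideal.mem_span_singleton_self f

theorem smul_eq_zero_iff (h : IsExactPair f g) {N : Type*} [AddCommGroup N] [Module A N]
    [Module.Free A N] {x : N} : f • x = 0 ↔ ∃ y, x = g • y := by
  refine ⟨fun hx ↦ ?_, ?_⟩
  · let b := Module.Free.chooseBasis A N
    have coeff (i) : ∃ z, z * g = b.repr x i := by
      rw [← Ideal.mem_span_singleton', ← h.mul_left_eq_zero_iff, mul_comm]
      simpa using congr(b.repr $hx i)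
    choose z hz using coeff
    refine ⟨∑ i ∈ (b.repr x).support, z i • b i, ?_⟩
    rw [Finset.smul_sum]
    conv_lhs => rw [← b.linearCombination_repr x, Finsupp.linearCombination_apply, Finsupp.sum]
    exact Finset.sum_congr rfl fun i _ ↦ by rw [smul_smul, mul_comm, hz]
  · rintro ⟨y, rfl⟩
    rw [smul_smul, h.mul_eq_zero, zero_smul]

end IsExactPair

end ExactPair

section Koszul

open ExteriorAlgebra
open CliffordAlgebra (involute)

variable {A : Type u} [CommRing A] {V : Type u} [AddCommGroup V] [Module A V] (φ : V →ₗ[A] A)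

/-- The Koszul differential on the exterior algebra of `V`: the antiderivation extending `φ`. -/
noncomputable def koszulD : ExteriorAlgebra A V →ₗ[A] ExteriorAlgebra A V :=
  CliffordAlgebra.contractLeft (Q := (0 : QuadraticForm A V)) φ

theorem koszulD_ι_mul (v : V) (x : ExteriorAlgebra A V) :
    koszulD φ (ι A v * x) = φ v • x - ι A v * koszulD φ x :=
  CliffordAlgebra.contractLeft_ι_mul φ v x

theorem koszulD_algebraMap (a : A) : koszulD φ (algebraMap A _ a) = 0 :=
  CliffordAlgebra.contractLeft_algebraMap (Q := (0 : QuadraticForm A V)) φ a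

theorem koszulD_one : koszulD φ 1 = 0 :=
  CliffordAlgebra.contractLeft_one (Q := (0 : QuadraticForm A V)) φ

theorem koszulD_ι (v : V) : koszulD φ (ι A v) = algebraMap A _ (φ v) :=
  CliffordAlgebra.contractLeft_ι (Q := (0 : QuadraticForm A V)) φ v

theorem koszulD_koszulD (x : ExteriorAlgebra A V) : koszulD φ (koszulD φ x) = 0 :=
  CliffordAlgebra.contractLeft_contractLeft φ x

theorem involute_ι' (v : V) :
    involute (Q := (0 : QuadraticForm A V)) (ι A v) = -ι A v := CliffordAlgebra.involute_ι v

theorem koszulD_mul (x y : ExteriorAlgebra A V) :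
    koszulD φ (x * y) = koszulD φ x * y + involute x * koszulD φ y := by
  induction x using CliffordAlgebra.left_induction with
  | algebraMap a =>
    rw [koszulD_algebraMap, zero_mul, zero_add, AlgHom.commutes, ← Algebra.smul_def, map_smul,
      Algebra.smul_def]
  | add x x' hx hx' => simp only [add_mul, map_add, hx, hx']; abel
  | ι_mul x v hx =>
    rw [mul_assoc, koszulD_ι_mul, koszulD_ι_mul, hx, map_mul, involute_ι', sub_mul, mul_add,
      smul_mul_assoc, neg_mul, neg_mul, mul_assoc, mul_assoc]
    abel

theorem involute_koszulD (x : ExteriorAlgebra A V) :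
    involute (koszulD φ x) = -koszulD φ (involute x) := by
  induction x using CliffordAlgebra.left_induction with
  | algebraMap a => simp only [koszulD_algebraMap, AlgHom.commutes, map_zero, neg_zero]
  | add x y hx hy => simp only [map_add, hx, hy, neg_add]
  | ι_mul x v hx =>
    simp only [koszulD_ι_mul, map_sub, map_smul, map_mul, involute_ι', hx, neg_mul, map_neg]
    rw [mul_neg]; abel

theorem algebraMapInv_koszulD_mem {I : Ideal A} (hφ : ∀ v, φ v ∈ I) (x : ExteriorAlgebra A V) :
    algebraMapInv (koszulD φ x) ∈ I := by
  induction x using CliffordAlgebra.left_induction with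
  | algebraMap a => simp only [koszulD_algebraMap, map_zero, I.zero_mem]
  | add x y hx hy => rw [map_add, map_add]; exact I.add_mem hx hy
  | ι_mul x v hx =>
    rw [koszulD_ι_mul, map_sub, map_smul, map_mul, smul_eq_mul]
    exact I.sub_mem (I.mul_mem_right _ (hφ v)) (I.mul_mem_left _ hx)

section DividedPower

theorem ι_mul_ι_mul_ι (v x y : V) : ι A v * (ι A x * ι A y) = ι A x * ι A y * ι A v := by
  have swap (x y : V) : ι A x * ι A y = -(ι A y * ι A x) :=
    eq_neg_of_add_eq_zero_left (ι_add_mul_swap x y)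
  rw [← mul_assoc, swap v x, neg_mul, mul_assoc, swap v y, mul_neg, neg_neg, mul_assoc]

/-- The `n`-th divided power of the element `∑ x ∧ y` of `⋀² V`, the sum being over the pairs
`(x, y)` of the list. -/
noncomputable def dividedPower : List (V × V) → ℕ → ExteriorAlgebra A V
  | _, 0 => 1
  | [], _ + 1 => 0
  | h :: l, n + 1 => dividedPower l (n + 1) + ι A h.1 * ι A h.2 * dividedPower l n

theorem dividedPower_zero (l : List (V × V)) : dividedPower (A := A) l 0 = 1 := by
  cases l <;> rfl

theorem dividedPower_eq_zero {l : List (V × V)} {n : ℕ} (hn : l.length < n) :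
    dividedPower (A := A) l n = 0 := by
  induction l generalizing n with
  | nil =>
    obtain ⟨n, rfl⟩ := Nat.exists_eq_add_of_lt hn
    rfl
  | cons h l ih =>
    obtain ⟨n, rfl⟩ := Nat.exists_eq_succ_of_ne_zero (Nat.ne_zero_of_lt hn)
    rw [List.length_cons] at hn
    rw [dividedPower, ih (by omega), ih (by omega), mul_zero, add_zero]

/-- The vector `v` with `ι v` the Koszul differential of `x ∧ y`. -/
def koszulPair (p : V × V) : V := φ p.1 • p.2 - φ p.2 • p.1

theorem koszulD_ι_mul_ι_mul (x y : V) (e : ExteriorAlgebra A V) :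
    koszulD φ (ι A x * ι A y * e) =
      ι A (koszulPair φ (x, y)) * e + ι A x * ι A y * koszulD φ e := by
  simp only [koszulPair, mul_assoc, koszulD_ι_mul, map_sub, map_smul, sub_mul, smul_mul_assoc,
    mul_sub, mul_smul_comm]
  abel

theorem ι_koszulPair_mul (x y : V) :
    ι A (koszulPair φ (x, y)) * (ι A x * ι A y) = 0 := by
  rw [koszulPair, map_sub, sub_mul, map_smul, map_smul, smul_mul_assoc, smul_mul_assoc,
    ι_mul_ι_mul_ι, mul_assoc, ι_sq_zero, mul_zero, ← mul_assoc, ι_sq_zero, zero_mul, smul_zero,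
    smul_zero, sub_zero]

theorem koszulD_dividedPower_succ (l : List (V × V)) (n : ℕ) :
    koszulD φ (dividedPower l (n + 1)) = ι A (l.map (koszulPair φ)).sum * dividedPower l n := by
  induction l generalizing n with
  | nil => simp [dividedPower]
  | cons h l ih =>
    rw [dividedPower, map_add, ih, koszulD_ι_mul_ι_mul, List.map_cons, List.sum_cons, map_add,
      add_mul]
    cases n with
    | zero => rw [dividedPower_zero, dividedPower_zero, koszulD_one, mul_zero, add_zero, add_comm]
    | succ n =>
      rw [ih, dividedPower, mul_add, mul_add, ← mul_assoc _ (_ * _), ι_koszulPair_mul, zero_mul,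
        ← mul_assoc _ (_ * _), ι_mul_ι_mul_ι, ← mul_assoc _ (ι A _)]
      abel

/-- The vectors `v` for which `ι v` is the Koszul differential of an element of `⋀² V`. -/
def koszulBoundaries : Submodule A V := Submodule.span A (Set.range (koszulPair φ))

theorem exists_list_of_mem_koszulBoundaries {v : V} (hv : v ∈ koszulBoundaries φ) :
    ∃ l : List (V × V), (l.map (koszulPair φ)).sum = v := by
  induction hv using Submodule.span_induction with
  | mem v hv =>
    obtain ⟨p, rfl⟩ := hv
    exact ⟨[p], by simp⟩
  | zero => exact ⟨[], rfl⟩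
  | add v w _ _ hv hw =>
    obtain ⟨l, rfl⟩ := hv
    obtain ⟨l', rfl⟩ := hw
    exact ⟨l ++ l', by simp⟩
  | smul a v _ hv =>
    obtain ⟨l, rfl⟩ := hv
    refine ⟨l.map fun p ↦ (a • p.1, p.2), ?_⟩
    rw [List.smul_sum, List.map_map, List.map_map]
    congr 2
    ext p
    simp only [Function.comp_apply, koszulPair, map_smul, smul_sub, smul_eq_mul, mul_smul,
      smul_comm a]

theorem smul_mem_koszulBoundaries (u : V) {v : V} (hv : φ v = 0) :
    φ u • v ∈ koszulBoundaries φ :=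
  Submodule.subset_span ⟨(u, v), by rw [koszulPair, hv, zero_smul, sub_zero]⟩

theorem koszulD_mem_map_koszulBoundaries {x : ExteriorAlgebra A V} (hx : x ∈ ⋀[A]^2 V) :
    koszulD φ x ∈ (koszulBoundaries φ).map (ι A) := by
  rw [exteriorPower, pow_two] at hx
  induction hx using Submodule.mul_induction_on' with
  | mem_mul_mem x hx y hy =>
    obtain ⟨x, rfl⟩ := hx
    obtain ⟨y, rfl⟩ := hy
    refine ⟨koszulPair φ (x, y), Submodule.subset_span ⟨_, rfl⟩, ?_⟩
    simpa [koszulD_one] using (koszulD_ι_mul_ι_mul φ x y 1).symm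
  | add x _ y _ hx hy => rw [map_add]; exact add_mem hx hy

variable [Module.Free A V]

instance exteriorAlgebra_free : Module.Free A (ExteriorAlgebra A V) := by
  classical
  let _ : LinearOrder (Module.Free.ChooseBasisIndex A V) := linearOrderOfSTO WellOrderingRel
  exact .of_basis (Module.Free.chooseBasis A V).ExteriorAlgebra

-- Otherwise `ω` has `dω = g ι s`, so that `d(ι s · ω⁽ⁿ⁾) = f ω⁽ⁿ⁾`; dividing by `f` and `g` along
-- `dω⁽ⁿ⁺¹⁾ = g ι s · ω⁽ⁿ⁾`, every divided power of `ω` down to `ω⁽⁰⁾ = 1` is a boundary modulo `g`.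
theorem smul_notMem_koszulBoundaries [IsLocalRing A] {g : A} {s : V} (hfg : IsExactPair (φ s) g)
    (hg : g ∈ maximalIdeal A) (hφ : ∀ v, φ v ∈ maximalIdeal A) : g • s ∉ koszulBoundaries φ := by
  intro hgs
  obtain ⟨l, hl⟩ := exists_list_of_mem_koszulBoundaries φ hgs
  have d_power (n) : koszulD φ (dividedPower l (n + 1)) = g • (ι A s * dividedPower l n) := by
    rw [koszulD_dividedPower_succ, hl, map_smul, smul_mul_assoc]
  have d_ι_power (n) : koszulD φ (ι A s * dividedPower l n) = φ s • dividedPower l n := by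
    cases n with
    | zero => rw [koszulD_ι_mul, dividedPower_zero, koszulD_one, mul_zero, sub_zero]
    | succ n =>
      rw [koszulD_ι_mul, d_power, mul_smul_comm, ← mul_assoc, ι_sq_zero, zero_mul, smul_zero,
        sub_zero]
  have boundary_mod (n) (hn : n ≤ l.length + 1) :
      ∃ x y, dividedPower (A := A) l n = koszulD φ x + g • y := by
    induction hn using Nat.decreasingInduction with
    | self => exact ⟨0, 0, by rw [dividedPower_eq_zero (Nat.lt_succ_self _)]; simp⟩
    | of_succ n _ ih =>
      obtain ⟨x, y, hxy⟩ := ih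
      have hy : g • (ι A s * dividedPower l n - koszulD φ y) = 0 := by
        rw [smul_sub, ← d_power, hxy, map_add, koszulD_koszulD, map_smul, zero_add, sub_self]
      obtain ⟨z, hz⟩ := hfg.symm.smul_eq_zero_iff.1 hy
      have hz' : φ s • (dividedPower l n - koszulD φ z) = 0 := by
        rw [smul_sub, ← d_ι_power, ← map_smul, ← hz, map_sub, koszulD_koszulD, sub_zero, sub_self]
      obtain ⟨w, hw⟩ := hfg.smul_eq_zero_iff.1 hz'
      exact ⟨z, w, by rw [← hw]; abel⟩
  obtain ⟨x, y, hxy⟩ := boundary_mod 0 (Nat.zero_le _)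
  have one_mem : algebraMapInv (dividedPower (A := A) l 0) ∈ maximalIdeal A := by
    rw [hxy, map_add, map_smul]
    exact add_mem (algebraMapInv_koszulD_mem φ hφ x) (Ideal.mul_mem_right _ _ hg)
  rw [dividedPower_zero, map_one] at one_mem
  exact (Ideal.ne_top_iff_one _).1 (maximalIdeal.isMaximal A).ne_top one_mem

end DividedPower

theorem exists_functional_koszulBoundaries [Module.Free A V] [IsLocalRing A]
    (hφ : LinearMap.range φ = maximalIdeal A) {g : A} {s : V} (hfg : IsExactPair (φ s) g)
    (hg : g ∈ maximalIdeal A) :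
    ∃ l : LinearMap.ker φ →ₗ[A] ResidueField A,
      (∀ v : LinearMap.ker φ, ↑v ∈ koszulBoundaries φ → l v = 0) ∧
      ∀ v : LinearMap.ker φ, (v : V) = g • s → l v ≠ 0 := by
  let B := (koszulBoundaries φ).submoduleOf (LinearMap.ker φ)
  have torsion : Module.IsTorsionBySet A (LinearMap.ker φ ⧸ B) (maximalIdeal A) := by
    rintro x ⟨a, ha⟩
    obtain ⟨v, rfl⟩ := B.mkQ_surjective x
    rw [SetLike.mem_coe, ← hφ] at ha
    obtain ⟨u, rfl⟩ := ha
    rw [← map_smul, Submodule.mkQ_apply, Submodule.Quotient.mk_eq_zero]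
    exact smul_mem_koszulBoundaries φ u v.2
  let _ : Module (ResidueField A) (LinearMap.ker φ ⧸ B) := torsion.module
  have : IsScalarTower A (ResidueField A) (LinearMap.ker φ ⧸ B) := torsion.isScalarTower
  have gs_mem : g • s ∈ LinearMap.ker φ := by
    rw [LinearMap.mem_ker, map_smul, smul_eq_mul, mul_comm, hfg.mul_eq_zero]
  have gs_ne : B.mkQ ⟨g • s, gs_mem⟩ ≠ 0 := by
    rw [Submodule.mkQ_apply, Ne, Submodule.Quotient.mk_eq_zero]
    exact smul_notMem_koszulBoundaries φ hfg hg fun v ↦ hφ ▸ LinearMap.mem_range_self φ v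
  rw [Ne, ← Module.forall_dual_apply_eq_zero_iff (ResidueField A), not_forall] at gs_ne
  obtain ⟨l, hl⟩ := gs_ne
  refine ⟨l.restrictScalars A ∘ₗ B.mkQ, fun v hv ↦ ?_, fun v hv ↦ ?_⟩
  · rw [LinearMap.comp_apply, Submodule.mkQ_apply, (Submodule.Quotient.mk_eq_zero B).2 hv, map_zero]
  · obtain rfl : v = ⟨g • s, gs_mem⟩ := Subtype.ext hv
    exact hl

section Grading

/-- The grading of the exterior algebra of `V`, extended by zero to negative degrees. -/
def exteriorGrading (A V : Type u) [CommRing A] [AddCommGroup V] [Module A V] :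
    ℤ → Submodule A (ExteriorAlgebra A V)
  | .ofNat n => ⋀[A]^n V
  | .negSucc _ => ⊥

theorem exteriorGrading_natCast (n : ℕ) : exteriorGrading A V n = ⋀[A]^n V := rfl

theorem exteriorGrading_of_neg {n : ℤ} (hn : n < 0) : exteriorGrading A V n = ⊥ := by
  obtain ⟨n, rfl⟩ := Int.exists_eq_neg_ofNat hn.le
  cases n with
  | zero => exact absurd hn (lt_irrefl 0)
  | succ n => rfl

instance exteriorGrading_free [Module.Free A V] (n : ℤ) :
    Module.Free A (exteriorGrading A V n) := by
  cases n with
  | ofNat n => exact inferInstanceAs (Module.Free A (⋀[A]^n V))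
  | negSucc n => exact inferInstanceAs (Module.Free A (⊥ : Submodule A (ExteriorAlgebra A V)))

theorem ι_mem_exteriorGrading (v : V) : ι A v ∈ exteriorGrading A V 1 :=
  (pow_one (LinearMap.range (ι A (M := V)))).ge (LinearMap.mem_range_self _ v)

theorem one_mem_exteriorGrading : 1 ∈ exteriorGrading A V 0 :=
  SetLike.GradedOne.one_mem (A := fun n : ℕ ↦ ⋀[A]^n V)

variable {i j : ℤ} {x y : ExteriorAlgebra A V}

theorem mul_mem_exteriorGrading (hx : x ∈ exteriorGrading A V i)
    (hy : y ∈ exteriorGrading A V j) : x * y ∈ exteriorGrading A V (i + j) := by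
  rcases lt_or_ge i 0 with hi | hi
  · rw [exteriorGrading_of_neg hi, Submodule.mem_bot] at hx
    rw [hx, zero_mul]
    exact zero_mem _
  rcases lt_or_ge j 0 with hj | hj
  · rw [exteriorGrading_of_neg hj, Submodule.mem_bot] at hy
    rw [hy, mul_zero]
    exact zero_mem _
  lift i to ℕ using hi
  lift j to ℕ using hj
  exact SetLike.GradedMul.mul_mem (A := fun n : ℕ ↦ ⋀[A]^n V) hx hy

theorem involute_mem_exteriorGrading (hx : x ∈ exteriorGrading A V i) :
    involute x ∈ exteriorGrading A V i := by
  rcases lt_or_ge i 0 with hi | hi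
  · rw [exteriorGrading_of_neg hi, Submodule.mem_bot] at hx
    rw [hx, map_zero]
    exact zero_mem _
  lift i to ℕ using hi
  have range_le : (LinearMap.range (ι A (M := V))).map
      (involute (Q := (0 : QuadraticForm A V))).toLinearMap ≤ LinearMap.range (ι A) := by
    rintro _ ⟨_, ⟨v, rfl⟩, rfl⟩
    exact ⟨-v, by rw [map_neg]; exact (involute_ι' v).symm⟩
  have := Submodule.mem_map_of_mem (f := (involute (Q := (0 : QuadraticForm A V))).toLinearMap) hx
  rw [exteriorGrading_natCast, exteriorPower, Submodule.map_pow] at this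
  exact pow_le_pow_left' range_le i this

theorem mem_exteriorGrading_zero : x ∈ exteriorGrading A V 0 ↔ ∃ a, algebraMap A _ a = x := by
  change x ∈ LinearMap.range (ι A) ^ 0 ↔ _
  rw [pow_zero, Submodule.mem_one]

theorem mem_exteriorGrading_one : x ∈ exteriorGrading A V 1 ↔ ∃ v, ι A v = x := by
  change x ∈ LinearMap.range (ι A) ^ 1 ↔ _
  rw [pow_one, LinearMap.mem_range]

theorem koszulD_mem_exteriorGrading (hx : x ∈ exteriorGrading A V i) :
    koszulD φ x ∈ exteriorGrading A V (i - 1) := by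
  rcases lt_or_ge i 0 with hi | hi
  · rw [exteriorGrading_of_neg hi, Submodule.mem_bot] at hx
    rw [hx, map_zero]
    exact zero_mem _
  lift i to ℕ using hi
  induction i generalizing x with
  | zero =>
    obtain ⟨a, rfl⟩ := mem_exteriorGrading_zero.1 hx
    rw [koszulD_algebraMap]
    exact zero_mem _
  | succ i ih =>
    rw [exteriorGrading_natCast, exteriorPower, pow_succ'] at hx
    induction hx using Submodule.mul_induction_on' with
    | mem_mul_mem v hv y hy =>
      obtain ⟨v, rfl⟩ := hv
      rw [koszulD_ι_mul, Nat.cast_succ, add_sub_cancel_right]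
      refine sub_mem (Submodule.smul_mem _ _ hy) ?_
      simpa using mul_mem_exteriorGrading (ι_mem_exteriorGrading v) (ih hy)
    | add x _ y _ hx hy => rw [map_add]; exact add_mem hx hy

end Grading

end Koszul

section FreeSubmodules

variable {A M N : Type*} [CommRing A] [AddCommGroup M] [Module A M] [AddCommGroup N] [Module A N]

theorem free_submodule_prod (p : Submodule A M) (q : Submodule A N) [Module.Free A p]
    [Module.Free A q] : Module.Free A (p.prod q) :=
  .of_equiv
    { toFun x := ⟨(x.1, x.2), x.1.2, x.2.2⟩
      invFun x := (⟨x.1.1, x.2.1⟩, ⟨x.1.2, x.2.2⟩)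
      map_add' _ _ := rfl
      map_smul' _ _ := rfl : (p × q) ≃ₗ[A] p.prod q }

theorem free_finsupp_submodule (ι : Type*) (p : Submodule A M) [Module.Free A p] :
    Module.Free A (Finsupp.submodule fun _ : ι ↦ p) := by
  have h := Finsupp.range_mapRange_linearMap p.subtype p.ker_subtype ι
  simp only [p.range_subtype] at h
  rw [← h]
  exact .of_equiv (LinearEquiv.ofInjective _
    (Finsupp.mapRange_injective _ (map_zero _) p.subtype_injective))

end FreeSubmodules

section KoszulModule

open ExteriorAlgebra
open CliffordAlgebra (involute)

variable {A V : Type u} [CommRing A] [AddCommGroup V] [Module A V] {φ : V →ₗ[A] A}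

/-- A free differential graded module over the Koszul algebra of `φ` that agrees with it in degrees
`0` and `1`, together with an endomorphism `χ` of degree `-2`. The map `η` reads off the coefficient
at `one` of an element of degree `0`. Degrees are integers so that `d` and `χ` need no truncation,
and the graded pieces are submodules of one carrier, which need not be their direct sum. -/
structure KoszulModule (φ : V →ₗ[A] A) where
  carrier : Type u
  [addCommGroup : AddCommGroup carrier]
  [module : Module A carrier]
  [exteriorModule : Module (ExteriorAlgebra A V) carrier]
  [isScalarTower : IsScalarTower A (ExteriorAlgebra A V) carrier]
  gr : ℤ → Submodule A carrier
  gr_free : ∀ n, Module.Free A (gr n)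
  gr_of_neg : ∀ n < 0, gr n = ⊥
  smul_mem : ∀ {i n e} {x : carrier}, e ∈ exteriorGrading A V i → x ∈ gr n → e • x ∈ gr (i + n)
  d : carrier →ₗ[A] carrier
  d_mem : ∀ {n} {x : carrier}, x ∈ gr n → d x ∈ gr (n - 1)
  d_d : ∀ x, d (d x) = 0
  d_smul : ∀ (e : ExteriorAlgebra A V) (x : carrier),
    d (e • x) = koszulD φ e • x + involute e • d x
  χ : carrier →ₗ[ExteriorAlgebra A V] carrier
  χ_mem : ∀ {n} {x : carrier}, x ∈ gr n → χ x ∈ gr (n - 2)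
  χ_d : ∀ x, χ (d x) = d (χ x)
  one : carrier
  one_mem : one ∈ gr 0
  η : carrier →ₗ[A] A
  η_one : η one = 1
  eq_η_smul_one : ∀ x ∈ gr 0, x = η x • one
  exists_eq_ι_smul_one : ∀ x ∈ gr 1, ∃ v : V, x = ι A v • one

namespace KoszulModule

attribute [instance] addCommGroup module exteriorModule isScalarTower gr_free

variable (F : KoszulModule φ)

theorem d_one : F.d F.one = 0 := by
  simpa [F.gr_of_neg] using F.d_mem F.one_mem

theorem d_ι_smul (v : V) (x : F.carrier) : F.d (ι A v • x) = φ v • x - ι A v • F.d x := by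
  rw [F.d_smul, koszulD_ι, algebraMap_smul, involute_ι', neg_smul, sub_eq_add_neg]

theorem d_ι_smul_one (v : V) : F.d (ι A v • F.one) = φ v • F.one := by
  rw [d_ι_smul, d_one, smul_zero, sub_zero]

theorem ι_smul_one_mem (v : V) : ι A v • F.one ∈ F.gr 1 :=
  F.smul_mem (ι_mem_exteriorGrading v) F.one_mem

theorem exists_ker_eq_ι_smul_one {x : F.carrier} (hx : x ∈ F.gr 1) (hdx : F.d x = 0) :
    ∃ v : LinearMap.ker φ, x = ι A (v : V) • F.one := by
  obtain ⟨v, rfl⟩ := F.exists_eq_ι_smul_one x hx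
  refine ⟨⟨v, ?_⟩, rfl⟩
  rw [d_ι_smul_one] at hdx
  simpa [F.η_one] using congr(F.η $hdx)

/-- Exactness in degree `n`. -/
def ExactAt (n : ℤ) : Prop := ∀ x ∈ F.gr n, F.d x = 0 → ∃ y ∈ F.gr (n + 1), F.d y = x

/-- The functional `l` on the cycles of degree `1` is the class of the cocycle `χ` in degree `2`,
reduced modulo the maximal ideal. -/
def RepresentsClass [IsLocalRing A] (l : LinearMap.ker φ →ₗ[A] ResidueField A) : Prop :=
  ∀ x ∈ F.gr 2, ∀ v : LinearMap.ker φ, F.d x = ι A (v : V) • F.one → residue A (F.η (F.χ x)) = l v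

variable (φ) in
/-- The Koszul algebra as a module over itself, with `χ = 0`. -/
noncomputable def koszul [Module.Free A V] : KoszulModule φ where
  carrier := ExteriorAlgebra A V
  gr := exteriorGrading A V
  gr_free := exteriorGrading_free
  gr_of_neg _ := exteriorGrading_of_neg
  smul_mem := mul_mem_exteriorGrading
  d := koszulD φ
  d_mem := koszulD_mem_exteriorGrading φ
  d_d := koszulD_koszulD φ
  d_smul := koszulD_mul φ
  χ := 0
  χ_mem _ := zero_mem _
  χ_d _ := (map_zero _).symm
  one := 1
  one_mem := one_mem_exteriorGrading
  η := algebraMapInv.toLinearMap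
  η_one := map_one algebraMapInv
  eq_η_smul_one x hx := by
    obtain ⟨a, rfl⟩ := mem_exteriorGrading_zero.1 hx
    rw [AlgHom.toLinearMap_apply, algebraMap_leftInverse, Algebra.algebraMap_eq_smul_one]
  exists_eq_ι_smul_one x hx := by
    obtain ⟨v, rfl⟩ := mem_exteriorGrading_one.1 hx
    exact ⟨v, (mul_one _).symm⟩

section Attach

variable {F} {N : ℤ}

/-- The cycles of degree `n`. -/
def cycles (F : KoszulModule φ) (n : ℤ) : Submodule A F.carrier := F.gr n ⊓ LinearMap.ker F.d

/-- The extension to the free module on the cycles of degree `N` of a map defined on the cycles. -/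
noncomputable abbrev onCells (y : F.cycles N → F.carrier) :
    (F.cycles N →₀ ExteriorAlgebra A V) →ₗ[ExteriorAlgebra A V] F.carrier :=
  Finsupp.linearCombination (ExteriorAlgebra A V) y

/-- The Koszul differential on each cell. -/
noncomputable def cellD (F : KoszulModule φ) (N : ℤ) :
    (F.cycles N →₀ ExteriorAlgebra A V) →ₗ[A] F.cycles N →₀ ExteriorAlgebra A V :=
  Finsupp.mapRange.linearMap (koszulD φ)

/-- The grading involution of the exterior algebra on each cell. -/
noncomputable def cellInvolute (F : KoszulModule φ) (N : ℤ) :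
    (F.cycles N →₀ ExteriorAlgebra A V) →ₗ[A] F.cycles N →₀ ExteriorAlgebra A V :=
  Finsupp.mapRange.linearMap (involute (Q := (0 : QuadraticForm A V))).toLinearMap

/-- The grading of the cells: the generators have degree `N + 1`. -/
noncomputable def cellGrading (F : KoszulModule φ) (N n : ℤ) :
    Submodule A (F.cycles N →₀ ExteriorAlgebra A V) :=
  Finsupp.submodule fun _ ↦ exteriorGrading A V (n - N - 1)

section Cells

variable {n m : ℤ} {y : F.cycles N → F.carrier} {b : F.cycles N →₀ ExteriorAlgebra A V}

theorem cellGrading_of_le (hn : n ≤ N) : F.cellGrading N n = ⊥ := by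
  refine (Submodule.eq_bot_iff _).2 fun b hb ↦ Finsupp.ext fun z ↦ ?_
  simpa [exteriorGrading_of_neg (by omega : n - N - 1 < 0)] using hb z

theorem smul_mem_cellGrading {e : ExteriorAlgebra A V} (he : e ∈ exteriorGrading A V m)
    (hb : b ∈ F.cellGrading N n) : e • b ∈ F.cellGrading N (m + n) := fun z ↦ by
  rw [show m + n - N - 1 = m + (n - N - 1) by ring]
  exact mul_mem_exteriorGrading he (hb z)

theorem cellD_mem (hb : b ∈ F.cellGrading N n) : F.cellD N b ∈ F.cellGrading N (n - 1) := fun z ↦ by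
  rw [show n - 1 - N - 1 = n - N - 1 - 1 by ring]
  exact koszulD_mem_exteriorGrading φ (hb z)

theorem cellInvolute_mem (hb : b ∈ F.cellGrading N n) : F.cellInvolute N b ∈ F.cellGrading N n :=
  fun z ↦ involute_mem_exteriorGrading (hb z)

theorem onCells_mem (hy : ∀ z, y z ∈ F.gr m) (hb : b ∈ F.cellGrading N n) :
    onCells y b ∈ F.gr (n - N - 1 + m) := by
  rw [onCells, Finsupp.linearCombination_apply]
  exact Submodule.sum_mem _ fun z _ ↦ F.smul_mem (hb z) (hy z)

theorem cellD_cellD : F.cellD N (F.cellD N b) = 0 :=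
  Finsupp.ext fun z ↦ koszulD_koszulD φ (b z)

theorem cellInvolute_cellD : F.cellInvolute N (F.cellD N b) = -F.cellD N (F.cellInvolute N b) :=
  Finsupp.ext fun z ↦ involute_koszulD φ (b z)

theorem cellInvolute_smul (e : ExteriorAlgebra A V) :
    F.cellInvolute N (e • b) = involute e • F.cellInvolute N b :=
  Finsupp.ext fun z ↦ map_mul involute e (b z)

theorem cellD_smul (e : ExteriorAlgebra A V) :
    F.cellD N (e • b) = koszulD φ e • b + involute e • F.cellD N b :=
  Finsupp.ext fun z ↦ koszulD_mul φ e (b z)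

theorem d_onCells :
    F.d (onCells y b) = onCells y (F.cellD N b) + onCells (F.d ∘ y) (F.cellInvolute N b) := by
  induction b using Finsupp.induction_linear with
  | zero => simp only [map_zero, add_zero]
  | add b c hb hc => simp only [map_add, hb, hc]; abel
  | single z e => simp [cellD, cellInvolute, F.d_smul]

theorem d_onCells_val :
    F.d (onCells ((↑) : F.cycles N → F.carrier) b) = onCells (↑) (F.cellD N b) := by
  rw [d_onCells, (funext fun z ↦ z.2.2 : F.d ∘ ((↑) : F.cycles N → F.carrier) = 0)]
  simp only [onCells, Finsupp.linearCombination_zero, LinearMap.zero_apply, add_zero]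

theorem exists_onCells_eq_sum (hb : b ∈ F.cellGrading N (N + 1)) :
    F.cellInvolute N b = b ∧
      ∃ a : F.cycles N → A, ∀ y, onCells y b = ∑ z ∈ b.support, a z • y z := by
  have degree_zero (z) : ∃ a, algebraMap A _ a = b z := by
    rw [← mem_exteriorGrading_zero]
    simpa using hb z
  choose a ha using degree_zero
  refine ⟨Finsupp.ext fun z ↦ ?_, a, fun y ↦ ?_⟩
  · change involute (b z) = b z
    rw [← ha, AlgHom.commutes]
  · rw [onCells, Finsupp.linearCombination_apply, Finsupp.sum]
    exact Finset.sum_congr rfl fun z _ ↦ by rw [← ha, algebraMap_smul]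

theorem χ_onCells : F.χ (onCells y b) = onCells (F.χ ∘ y) b :=
  Finsupp.apply_linearCombination ..

end Cells

/-- Adjunction of one free generator of degree `N + 1` for each cycle `z` of degree `N`, with
differential `z` and with `χ` taking the value `y z` on it. -/
noncomputable def attach [Module.Free A V] (hN : 1 ≤ N) (y : F.cycles N → F.carrier)
    (y_mem : ∀ z, y z ∈ F.gr (N - 1)) (d_y : ∀ z, F.d (y z) = F.χ z) : KoszulModule φ where
  carrier := F.carrier × (F.cycles N →₀ ExteriorAlgebra A V)
  gr n := (F.gr n).prod (F.cellGrading N n)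
  gr_free n :=
    have : Module.Free A (F.cellGrading N n) := free_finsupp_submodule _ _
    free_submodule_prod _ _
  gr_of_neg n hn := by
    rw [F.gr_of_neg n hn, cellGrading_of_le (by omega), Submodule.prod_bot]
  smul_mem he hx := ⟨F.smul_mem he hx.1, smul_mem_cellGrading he hx.2⟩
  d := LinearMap.prod (F.d.coprod ((onCells (↑)).restrictScalars A ∘ₗ cellInvolute F N))
    (cellD F N ∘ₗ LinearMap.snd A _ _)
  d_mem {n x} hx := by
    refine ⟨add_mem (F.d_mem hx.1) ?_, cellD_mem hx.2⟩
    rw [show n - 1 = n - N - 1 + N by ring]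
    exact onCells_mem (fun z ↦ z.2.1) (cellInvolute_mem hx.2)
  d_d x := by
    refine Prod.ext ?_ cellD_cellD
    simp [F.d_d, d_onCells_val, cellInvolute_cellD]
  d_smul e x := by
    refine Prod.ext ?_ (cellD_smul e)
    simp [F.d_smul, cellInvolute_smul, add_assoc]
  χ := LinearMap.prod (F.χ.coprod (onCells y)) 0
  χ_mem {n x} hx := by
    refine ⟨add_mem (F.χ_mem hx.1) ?_, zero_mem _⟩
    rw [show n - 2 = n - N - 1 + (N - 1) by ring]
    exact onCells_mem y_mem hx.2
  χ_d x := by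
    refine Prod.ext ?_ (map_zero (F.cellD N)).symm
    simp [F.χ_d, d_onCells, χ_onCells, (funext d_y : F.d ∘ y = _), Function.comp_def]
    abel
  one := (F.one, 0)
  one_mem := ⟨F.one_mem, zero_mem _⟩
  η := F.η ∘ₗ LinearMap.fst A _ _
  η_one := F.η_one
  eq_η_smul_one x hx := by
    rw [cellGrading_of_le (by omega)] at hx
    exact Prod.ext (F.eq_η_smul_one _ hx.1) (hx.2.trans (smul_zero _).symm)
  exists_eq_ι_smul_one x hx := by
    rw [cellGrading_of_le hN] at hx
    obtain ⟨v, hv⟩ := F.exists_eq_ι_smul_one _ hx.1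
    exact ⟨v, Prod.ext hv (hx.2.trans (smul_zero _).symm)⟩

section AttachExact

variable [Module.Free A V] {hN : 1 ≤ N} {y : F.cycles N → F.carrier}
  {y_mem : ∀ z, y z ∈ F.gr (N - 1)} {d_y : ∀ z, F.d (y z) = F.χ z}

theorem attach_d (x : F.carrier) (b : F.cycles N →₀ ExteriorAlgebra A V) :
    (attach hN y y_mem d_y).d (x, b) =
      (F.d x + onCells (↑) (F.cellInvolute N b), F.cellD N b) := rfl

theorem attach_χ (x : F.carrier) (b : F.cycles N →₀ ExteriorAlgebra A V) :
    (attach hN y y_mem d_y).χ (x, b) = (F.χ x + onCells y b, 0) := rfl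

theorem mem_gr_attach_of_le {n : ℤ} (hn : n ≤ N) {x : (attach hN y y_mem d_y).carrier}
    (hx : x ∈ (attach hN y y_mem d_y).gr n) : ∃ x' ∈ F.gr n, x = (x', 0) := by
  obtain ⟨hx₁, hx₂⟩ := hx
  rw [cellGrading_of_le hn] at hx₂
  exact ⟨x.1, hx₁, Prod.ext rfl hx₂⟩

theorem attach_d_fst (x : F.carrier) : (attach hN y y_mem d_y).d (x, 0) = (F.d x, 0) := by
  rw [attach_d, map_zero, map_zero, map_zero, add_zero]

theorem attach_χ_fst (x : F.carrier) : (attach hN y y_mem d_y).χ (x, 0) = (F.χ x, 0) := by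
  rw [attach_χ, map_zero, add_zero]

theorem attach_d_single (z : F.cycles N) :
    (attach hN y y_mem d_y).d (0, Finsupp.single z 1) = (z.1, 0) := by
  refine Prod.ext ?_ ?_ <;> simp [attach_d, cellD, cellInvolute, koszulD_one]

theorem ExactAt.attach {n : ℤ} (hn : n < N) (h : F.ExactAt n) :
    (attach hN y y_mem d_y).ExactAt n := by
  intro x hx hdx
  obtain ⟨x, hx', rfl⟩ := mem_gr_attach_of_le hn.le hx
  rw [attach_d_fst] at hdx
  obtain ⟨w, hw, rfl⟩ := h x hx' congr($hdx.1)
  exact ⟨(w, 0), ⟨hw, zero_mem _⟩, attach_d_fst w⟩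

theorem exactAt_attach : (attach hN y y_mem d_y).ExactAt N := by
  classical
  intro x hx hdx
  obtain ⟨x, hx', rfl⟩ := mem_gr_attach_of_le le_rfl hx
  rw [attach_d_fst] at hdx
  let z : F.cycles N := ⟨x, hx', congr($hdx.1)⟩
  refine ⟨(0, Finsupp.single z 1), ⟨zero_mem _, fun z' ↦ ?_⟩, attach_d_single z⟩
  rw [show N + 1 - N - 1 = 0 by ring, Finsupp.single_apply]
  split_ifs
  exacts [one_mem_exteriorGrading, zero_mem _]

theorem RepresentsClass.attach [IsLocalRing A] {l : LinearMap.ker φ →ₗ[A] ResidueField A}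
    (h : F.RepresentsClass l) (h2 : 2 ≤ N) : (attach hN y y_mem d_y).RepresentsClass l := by
  intro x hx v hv
  obtain ⟨x, hx', rfl⟩ := mem_gr_attach_of_le h2 hx
  rw [attach_d_fst] at hv
  rw [attach_χ_fst]
  exact h x hx' v congr($hv.1)

end AttachExact

end Attach

section Existence

variable [Module.Free A V] [IsLocalRing A]

theorem exists_representsClass_exactAt_one (l : LinearMap.ker φ →ₗ[A] ResidueField A)
    (hl : ∀ v : LinearMap.ker φ, ↑v ∈ koszulBoundaries φ → l v = 0) :
    ∃ F : KoszulModule φ, F.RepresentsClass l ∧ F.ExactAt 1 := by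
  let E := koszul φ
  choose v hv using fun z : E.cycles 1 ↦ E.exists_ker_eq_ι_smul_one z.2.1 z.2.2
  choose c hc using fun z ↦ residue_surjective (l (v z))
  refine ⟨attach (F := E) le_rfl (fun z ↦ c z • E.one) (fun z ↦ Submodule.smul_mem _ _ E.one_mem)
    (fun z ↦ by rw [map_smul, E.d_one, smul_zero]; rfl), ?_, exactAt_attach⟩
  rintro ⟨x, b⟩ ⟨hx, hb⟩ w hw
  obtain ⟨involute_b, a, onCells_b⟩ := exists_onCells_eq_sum hb
  obtain ⟨w', hw', d_x⟩ := koszulD_mem_map_koszulBoundaries φ hx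
  have d_x : E.d x = ι A w' • E.one := d_x.symm.trans (mul_one _).symm
  have d_eq : w' + ∑ z ∈ b.support, a z • (v z : V) = w := by
    have h : E.d x + onCells (↑) (E.cellInvolute 1 b) = ι A (w : V) • E.one := congr($hw.1)
    rw [involute_b, onCells_b, d_x, Finset.sum_congr rfl fun z _ ↦ congrArg (a z • ·) (hv z)] at h
    simp only [← smul_assoc, ← map_smul, ← Finset.sum_smul, ← map_sum, ← add_smul, ← map_add] at h
    exact (ι_inj A _ _).1 ((mul_one _).symm.trans (h.trans (mul_one (ι A (w : V)))))
  rw [← eq_sub_iff_add_eq] at d_eq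
  have l_w : l w = ∑ z ∈ b.support, a z • l (v z) := by
    simp only [← map_smul, ← map_sum]
    rw [← sub_eq_zero, ← map_sub]
    exact hl _ (by simpa [d_eq] using hw')
  rw [attach_χ, onCells_b, l_w]
  change residue A (E.η (0 + ∑ z ∈ b.support, a z • c z • E.one)) = _
  simp only [zero_add, map_sum, map_smul, E.η_one, smul_eq_mul, mul_one, map_mul, hc,
    Algebra.smul_def, ResidueField.algebraMap_eq]

theorem exists_representsClass_exactAt (hφ : LinearMap.range φ = maximalIdeal A)
    (l : LinearMap.ker φ →ₗ[A] ResidueField A)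
    (hl : ∀ v : LinearMap.ker φ, ↑v ∈ koszulBoundaries φ → l v = 0) (N : ℕ) :
    ∃ F : KoszulModule φ, F.RepresentsClass l ∧ ∀ n : ℤ, 0 < n → n < N + 2 → F.ExactAt n := by
  induction N with
  | zero =>
    obtain ⟨F, hF, hF1⟩ := exists_representsClass_exactAt_one l hl
    refine ⟨F, hF, fun n hn hn2 ↦ ?_⟩
    obtain rfl : n = 1 := by omega
    exact hF1
  | succ N ih =>
    obtain ⟨F, hF, exact⟩ := ih
    have lift (z : F.cycles (N + 2)) : ∃ y ∈ F.gr (N + 2 - 1), F.d y = F.χ z := by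
      have χz_mem : F.χ z ∈ F.gr N := by simpa using F.χ_mem z.2.1
      rw [show (N : ℤ) + 2 - 1 = N + 1 by ring]
      rcases N.eq_zero_or_pos with rfl | hN
      · have η_mem : F.η (F.χ z) ∈ LinearMap.range φ := by
          have := hF z z.2.1 0 (by simpa using z.2.2)
          rwa [map_zero, residue_eq_zero_iff, ← hφ] at this
        obtain ⟨v, hv⟩ := η_mem
        refine ⟨ι A v • F.one, F.ι_smul_one_mem v, ?_⟩
        rw [F.d_ι_smul_one, hv, ← F.eq_η_smul_one _ χz_mem]
      · refine exact N (by omega) (by omega) _ χz_mem ?_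
        rw [← F.χ_d, LinearMap.mem_ker.1 z.2.2, map_zero]
    choose y y_mem d_y using lift
    refine ⟨attach (by omega) y y_mem d_y, hF.attach (by omega), fun n hn hnN ↦ ?_⟩
    rcases (by omega : n = N + 2 ∨ n < N + 2) with rfl | hn'
    exacts [exactAt_attach, (exact n hn hn').attach hn']

end Existence

section Totalization

variable (F : KoszulModule φ) (s : V)

/-- The grading of the `F`-valued sequences in which the `l`-th entry is shifted by `2 * l`. The
sequences stand for the elements of `F ⊗ Γ`, where `Γ` is the divided power algebra on one variable
of degree `2`; in each degree only finitely many entries can be nonzero. -/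
def seqGr (n : ℤ) : Submodule A (ℕ → F.carrier) :=
  Submodule.pi Set.univ fun l ↦ F.gr (n - 2 * l)

/-- The sequence of left shifts of `x`. -/
def shift : (ℕ → F.carrier) →ₗ[A] ℕ → F.carrier := LinearMap.funLeft A F.carrier Nat.succ

/-- The endomorphism `d + s τ` of sequences, where `τ` is the shift. Its square is `φ s • τ`. -/
noncomputable def seqD : (ℕ → F.carrier) →ₗ[A] ℕ → F.carrier :=
  F.d.compLeft ℕ + (Algebra.lsmul A A F.carrier (ι A s)).compLeft ℕ ∘ₗ F.shift

variable {F s} {n : ℤ} {x : ℕ → F.carrier}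

theorem mem_seqGr : x ∈ F.seqGr n ↔ ∀ l : ℕ, x l ∈ F.gr (n - 2 * l) := by
  simp [seqGr, Submodule.mem_pi]

theorem seqD_apply (x : ℕ → F.carrier) (l : ℕ) :
    F.seqD s x l = F.d (x l) + ι A s • x (l + 1) := rfl

theorem shift_mem (hx : x ∈ F.seqGr n) : F.shift x ∈ F.seqGr (n - 2) :=
  mem_seqGr.2 fun l ↦ by
    rw [show n - 2 - 2 * l = n - 2 * (l + 1 : ℕ) by push_cast; ring]
    exact mem_seqGr.1 hx (l + 1)

theorem seqD_mem (hx : x ∈ F.seqGr n) : F.seqD s x ∈ F.seqGr (n - 1) :=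
  mem_seqGr.2 fun l ↦ by
    refine add_mem ?_ ?_
    · rw [sub_right_comm]
      exact F.d_mem (mem_seqGr.1 hx l)
    · rw [show n - 1 - 2 * l = 1 + (n - 2 * (l + 1 : ℕ)) by push_cast; ring]
      exact F.smul_mem (ι_mem_exteriorGrading s) (mem_seqGr.1 hx (l + 1))

theorem seqD_shift (x : ℕ → F.carrier) : F.seqD s (F.shift x) = F.shift (F.seqD s x) := rfl

theorem ι_smul_ι_smul (x : F.carrier) : ι A s • ι A s • x = 0 := by
  rw [smul_smul, ι_sq_zero, zero_smul]

theorem seqD_seqD (x : ℕ → F.carrier) : F.seqD s (F.seqD s x) = φ s • F.shift x := by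
  ext l
  simp only [seqD_apply, map_add, F.d_d, d_ι_smul, smul_add, ι_smul_ι_smul]
  rw [zero_add, add_zero, sub_add_cancel]
  rfl

/-- Prepend an entry to a sequence. -/
def cons (c : F.carrier) (x : ℕ → F.carrier) : ℕ → F.carrier
  | 0 => c
  | l + 1 => x l

theorem cons_mem {c : F.carrier} (hc : c ∈ F.gr n) (hx : x ∈ F.seqGr (n - 2)) :
    cons c x ∈ F.seqGr n :=
  mem_seqGr.2 fun
    | 0 => by
      change c ∈ _
      simpa using hc
    | l + 1 => by
      rw [show n - 2 * (l + 1 : ℕ) = n - 2 - 2 * l by push_cast; ring]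
      exact mem_seqGr.1 hx l

theorem cons_zero_shift (x : ℕ → F.carrier) : cons (x 0) (F.shift x) = x :=
  funext fun | 0 => rfl | _ + 1 => rfl

theorem seqD_cons (c : F.carrier) (x : ℕ → F.carrier) :
    F.seqD s (cons c x) = cons (F.d c + ι A s • x 0) (F.seqD s x) :=
  funext fun | 0 => rfl | _ + 1 => rfl

theorem seqGr_zero_mem (hx : x ∈ F.seqGr n) : x 0 ∈ F.gr n := by
  simpa using mem_seqGr.1 hx 0

variable (F) in
theorem seqGr_of_neg (hn : n < 0) : F.seqGr n = ⊥ :=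
  (Submodule.eq_bot_iff _).2 fun x hx ↦ funext fun l ↦ by
    simpa [F.gr_of_neg (n - 2 * l) (by omega)] using mem_seqGr.1 hx l

variable (F n) in
/-- A sequence of degree `n` is its first entry followed by a sequence of degree `n - 2`. -/
def consEquiv : (F.gr n × F.seqGr (n - 2)) ≃ₗ[A] F.seqGr n where
  toFun x := ⟨cons x.1 x.2, cons_mem x.1.2 x.2.2⟩
  invFun x := (⟨x.1 0, seqGr_zero_mem x.2⟩, ⟨F.shift x, shift_mem x.2⟩)
  map_add' _ _ := Subtype.ext (funext fun | 0 => rfl | _ + 1 => rfl)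
  map_smul' _ _ := Subtype.ext (funext fun | 0 => rfl | _ + 1 => rfl)
  left_inv _ := rfl
  right_inv x := Subtype.ext (cons_zero_shift x.1)

theorem free_seqGr_of_lt (N : ℕ) (hn : n < N) : Module.Free A (F.seqGr n) := by
  induction N generalizing n with
  | zero =>
    rw [seqGr_of_neg F (by simpa using hn)]
    infer_instance
  | succ N ih =>
    have := ih (n := n - 2) (by push_cast at hn; omega)
    exact .of_equiv (F.consEquiv n)

instance free_seqGr : Module.Free A (F.seqGr n) :=
  free_seqGr_of_lt (n.toNat + 1) (by omega)

section Class

variable {g : A}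

theorem χ_pow_d (j : ℕ) (x : F.carrier) : (F.χ ^ j) (F.d x) = F.d ((F.χ ^ j) x) := by
  induction j with
  | zero => rfl
  | succ j ih => rw [pow_succ', Module.End.mul_apply, Module.End.mul_apply, ih, F.χ_d]

theorem χ_pow_mem (j : ℕ) {x : F.carrier} (hx : x ∈ F.gr (n + 2 * j)) : (F.χ ^ j) x ∈ F.gr n := by
  induction j generalizing n with
  | zero => simpa using hx
  | succ j ih =>
    have := F.χ_mem (ih (n := n + 2) (by convert hx using 2; push_cast; ring))
    rwa [add_sub_cancel_right, ← Module.End.mul_apply, ← pow_succ'] at this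

theorem eq_zero_of_mem_gr_of_neg {x : F.carrier} (hx : x ∈ F.gr n) (hn : n < 0) : x = 0 := by
  rwa [F.gr_of_neg n hn, Submodule.mem_bot] at hx

theorem exists_seqGr_smul_eq {f : A} (hfg : IsExactPair f g) (hx : x ∈ F.seqGr n)
    (hfx : f • x = 0) : ∃ v ∈ F.seqGr n, x = g • v := by
  obtain ⟨v, hv⟩ := (hfg.smul_eq_zero_iff (x := (⟨x, hx⟩ : F.seqGr n))).1 (Subtype.ext hfx)
  exact ⟨v, v.2, congr(Subtype.val $hv)⟩

theorem exists_shift_sub_seqD_eq (hfg : IsExactPair (φ s) g) {y : ℕ → F.carrier}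
    (hx : x ∈ F.seqGr n) (hy : y ∈ F.seqGr (n - 1)) (hdx : F.seqD s x = φ s • y) :
    ∃ v ∈ F.seqGr (n - 2), F.shift x - F.seqD s y = g • v ∧
      ∃ v' ∈ F.seqGr (n - 2 - 1), F.seqD s v = φ s • v' := by
  have hdy : F.seqD s y ∈ F.seqGr (n - 2) := by
    convert seqD_mem hy using 2
    ring
  obtain ⟨v, hv, v_eq⟩ := exists_seqGr_smul_eq hfg (sub_mem (shift_mem hx) hdy) (by
    rw [smul_sub, ← seqD_seqD, hdx, map_smul, sub_self])
  refine ⟨v, hv, v_eq, exists_seqGr_smul_eq hfg.symm (seqD_mem hv) ?_⟩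
  rw [← map_smul, ← v_eq, map_sub, seqD_seqD, seqD_shift, hdx, map_smul, sub_self]

variable [IsLocalRing A]

variable (F) in
/-- The classes of the powers of `χ`, as functionals on sequences. -/
noncomputable def seqClass (j : ℕ) : (ℕ → F.carrier) →ₗ[A] ResidueField A :=
  Algebra.linearMap A (ResidueField A) ∘ₗ F.η ∘ₗ (F.χ ^ j).restrictScalars A ∘ₗ LinearMap.proj 0

theorem seqClass_apply (j : ℕ) (x : ℕ → F.carrier) :
    F.seqClass j x = residue A (F.η ((F.χ ^ j) (x 0))) := rfl

theorem residue_η_d (hφ : LinearMap.range φ = maximalIdeal A) {x : F.carrier} (hx : x ∈ F.gr 1) :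
    residue A (F.η (F.d x)) = 0 := by
  obtain ⟨v, rfl⟩ := F.exists_eq_ι_smul_one x hx
  rw [d_ι_smul_one, map_smul, F.η_one, smul_eq_mul, mul_one, residue_eq_zero_iff, ← hφ]
  exact LinearMap.mem_range_self φ v

theorem seqClass_seqD (hφ : LinearMap.range φ = maximalIdeal A) {j : ℕ}
    (hx : x ∈ F.seqGr (2 * j + 1)) : F.seqClass j (F.seqD s x) = 0 := by
  have h : (F.χ ^ j) (x 1) = 0 :=
    eq_zero_of_mem_gr_of_neg (χ_pow_mem j (n := -1) (by
      convert mem_seqGr.1 hx 1 using 2; push_cast; ring)) (by norm_num)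
  rw [seqClass_apply, seqD_apply, map_add, χ_pow_d, map_smul, h, smul_zero, add_zero]
  exact residue_η_d hφ (χ_pow_mem j (by simpa [add_comm] using seqGr_zero_mem hx))

variable {l : LinearMap.ker φ →ₗ[A] ResidueField A}

theorem RepresentsClass.residue_η_χ (hF : F.RepresentsClass l) {w : LinearMap.ker φ}
    (hw : (w : V) = g • s) {x x' y v : F.carrier} (hx : x ∈ F.gr 2) (hy : y ∈ F.gr 1)
    (hv : v ∈ F.gr 0) (hdx : F.d x + ι A s • x' = φ s • y) (hdy : x' - F.d y = g • v) :
    residue A (F.η (F.χ x)) = -(residue A (F.η v) * l w) := by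
  have d_sub : F.d (x - ι A s • y) = ι A (-(F.η v • w : LinearMap.ker φ) : V) • F.one := by
    have hx' : x' = g • F.η v • F.one + F.d y := by
      rw [← F.eq_η_smul_one v hv, ← hdy, sub_add_cancel]
    have hw' : ((F.η v • w : LinearMap.ker φ) : V) = F.η v • g • s := by
      rw [Submodule.coe_smul, hw]
    rw [map_sub, d_ι_smul, ← hdx, hx', hw', map_neg, map_smul, map_smul, neg_smul, smul_add,
      smul_comm _ g, smul_comm _ (F.η v), smul_assoc, smul_assoc, smul_comm g]
    abel
  have χy : F.χ y = 0 := eq_zero_of_mem_gr_of_neg (F.χ_mem hy) (by norm_num)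
  have := hF _ (sub_mem hx (F.smul_mem (ι_mem_exteriorGrading s) hy)) (-(F.η v • w)) d_sub
  rwa [map_sub, map_smul, χy, smul_zero, sub_zero, map_neg, map_smul, Algebra.smul_def] at this

theorem RepresentsClass.seqClass_succ (hF : F.RepresentsClass l) {w : LinearMap.ker φ}
    (hw : (w : V) = g • s) {j : ℕ} {y v : ℕ → F.carrier} (hx : x ∈ F.seqGr (2 * j + 2))
    (hy : y ∈ F.seqGr (2 * j + 1)) (hv : v ∈ F.seqGr (2 * j)) (hdx : F.seqD s x = φ s • y)
    (hdy : F.shift x - F.seqD s y = g • v) :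
    F.seqClass (j + 1) x = -(F.seqClass j v * l w) := by
  rw [seqClass_apply, pow_succ', Module.End.mul_apply]
  refine hF.residue_η_χ hw (χ_pow_mem j (by simpa [add_comm] using seqGr_zero_mem hx))
    (χ_pow_mem j (by simpa [add_comm] using seqGr_zero_mem hy))
    (χ_pow_mem j (by simpa [add_comm] using seqGr_zero_mem hv)) (x' := (F.χ ^ j) (x 1)) ?_ ?_
  · have := congr((F.χ ^ j) ($hdx 0))
    rwa [seqD_apply, map_add, χ_pow_d, map_smul, Pi.smul_apply,
      LinearMap.map_smul_of_tower] at this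
  · have y_one : (F.χ ^ j) (y 1) = 0 :=
      eq_zero_of_mem_gr_of_neg (χ_pow_mem j (n := -1) (by
        convert mem_seqGr.1 hy 1 using 2; push_cast; ring)) (by norm_num)
    have := congr((F.χ ^ j) ($hdy 0))
    rwa [Pi.sub_apply, seqD_apply, map_sub, map_add, map_smul, y_one, smul_zero, add_zero,
      χ_pow_d, Pi.smul_apply, LinearMap.map_smul_of_tower] at this

theorem exists_d_eq_of_le (hφ : LinearMap.range φ = maximalIdeal A) {N : ℕ}
    (exact : ∀ i : ℤ, 0 < i → i < N + 2 → F.ExactAt i) (hn : n ≤ N + 1) {c : F.carrier}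
    (hc : c ∈ F.gr n) (hdc : F.d c = 0) (hc0 : n = 0 → residue A (F.η c) = 0) :
    ∃ e ∈ F.gr (n + 1), F.d e = c := by
  rcases lt_trichotomy n 0 with hn0 | rfl | hn0
  · exact ⟨0, zero_mem _, by rw [map_zero, eq_zero_of_mem_gr_of_neg hc hn0]⟩
  · have η_mem : F.η c ∈ LinearMap.range φ := by
      rw [hφ, ← residue_eq_zero_iff, hc0 rfl]
    obtain ⟨v, hv⟩ := η_mem
    exact ⟨ι A v • F.one, F.ι_smul_one_mem v, by rw [d_ι_smul_one, hv, ← F.eq_η_smul_one c hc]⟩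
  · exact exact n hn0 (by omega) c hc hdc

theorem exists_seqD_eq_of_shift_eq (hφ : LinearMap.range φ = maximalIdeal A)
    {N : ℕ} (exact : ∀ i : ℤ, 0 < i → i < N + 2 → F.ExactAt i) (hn : n ≤ N + 1)
    {y : ℕ → F.carrier} (hx : x ∈ F.seqGr n) (hy : y ∈ F.seqGr (n - 1))
    (hdx : F.seqD s x = φ s • y) (hdy : F.shift x = F.seqD s y)
    (hcl : ∀ j : ℕ, n = 2 * j → F.seqClass j x = 0) : ∃ p ∈ F.seqGr (n + 1), F.seqD s p = x := by
  have hY : cons 0 y ∈ F.seqGr (n + 1) :=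
    cons_mem (zero_mem _) (by rwa [show n + 1 - 2 = n - 1 by ring])
  set c := x 0 - ι A s • y 0
  have x_sub : x - F.seqD s (cons 0 y) = cons c 0 := by
    rw [seqD_cons, ← hdy, map_zero, zero_add]
    exact funext fun | 0 => rfl | _ + 1 => sub_self _
  have hc : c ∈ F.gr n := by
    have := seqD_mem (s := s) hY
    rw [add_sub_cancel_right] at this
    exact seqGr_zero_mem (x_sub ▸ sub_mem hx this)
  have hdc : F.d c = 0 := by
    have := congr($(congr(F.seqD s $x_sub)) 0)
    rw [map_sub, seqD_seqD, hdx, show F.shift (cons 0 y) = y from rfl, sub_self,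
      seqD_cons, Pi.zero_apply, smul_zero, add_zero] at this
    exact this.symm
  have hc0 : n = 0 → residue A (F.η c) = 0 := by
    rintro rfl
    have := congr(F.seqClass 0 $x_sub)
    rw [map_sub, hcl 0 (by simp), seqClass_seqD hφ (by simpa using hY), sub_zero] at this
    exact this.symm
  obtain ⟨e, he, hde⟩ := exists_d_eq_of_le hφ exact hn hc hdc hc0
  refine ⟨cons 0 y + cons e 0, add_mem hY (cons_mem he (zero_mem _)), ?_⟩
  rw [map_add, ← eq_sub_iff_add_eq', x_sub, seqD_cons, map_zero, Pi.zero_apply, smul_zero, add_zero,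
    hde]

/-- In terms of the complex obtained by reducing `d + s τ` modulo `φ s`: the boundaries are the
cycles on which all the `seqClass j` vanish. -/
theorem RepresentsClass.exists_seqD_eq (hφ : LinearMap.range φ = maximalIdeal A)
    (hfg : IsExactPair (φ s) g) (hF : F.RepresentsClass l) {w : LinearMap.ker φ}
    (hw : (w : V) = g • s) (hlw : l w ≠ 0) {N : ℕ}
    (exact : ∀ i : ℤ, 0 < i → i < N + 2 → F.ExactAt i) (hn : n ≤ N + 1) {y : ℕ → F.carrier}
    (hx : x ∈ F.seqGr n) (hy : y ∈ F.seqGr (n - 1)) (hdx : F.seqD s x = φ s • y)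
    (hcl : ∀ j : ℕ, n = 2 * j → F.seqClass j x = 0) : ∃ p ∈ F.seqGr (n + 1), F.seqD s p = x := by
  obtain ⟨m, hm⟩ : ∃ m : ℕ, n < m := ⟨n.toNat + 1, by omega⟩
  induction m generalizing n x y with
  | zero =>
    rw [seqGr_of_neg F (by simpa using hm), Submodule.mem_bot] at hx
    exact ⟨0, zero_mem _, by rw [hx, map_zero]⟩
  | succ m ih =>
    obtain ⟨v, hv, v_eq, v', hv', hdv⟩ := exists_shift_sub_seqD_eq hfg hx hy hdx
    have v_class (j : ℕ) (hj : n - 2 = 2 * j) : F.seqClass j v = 0 := by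
      obtain rfl : n = 2 * j + 2 := by omega
      have := hF.seqClass_succ hw hx (by convert hy using 2; ring) (by simpa using hv) hdx v_eq
      rw [hcl (j + 1) (by push_cast; ring), zero_eq_neg] at this
      exact (mul_eq_zero.1 this).resolve_right hlw
    obtain ⟨p, hp, rfl⟩ := ih (by omega) hv hv' hdv v_class (by push_cast at hm; omega)
    rw [show n - 2 + 1 = n - 1 by ring] at hp
    refine exists_seqD_eq_of_shift_eq hφ exact hn hx (add_mem hy (Submodule.smul_mem _ g hp)) ?_ ?_
      hcl
    · rw [smul_add, smul_smul, hfg.mul_eq_zero, zero_smul, add_zero, hdx]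
    · rw [map_add, map_smul, ← v_eq, add_sub_cancel]

theorem RepresentsClass.exists_seqClass_ne_zero (hfg : IsExactPair (φ s) g)
    (hF : F.RepresentsClass l) {w : LinearMap.ker φ}
    (hw : (w : V) = g • s) (hlw : l w ≠ 0) {N : ℕ}
    (exact : ∀ i : ℤ, 0 < i → i < N + 2 → F.ExactAt i) {j : ℕ} (hj : 2 * j ≤ N + 1) :
    ∃ z ∈ F.seqGr (2 * j), F.seqD s z = 0 ∧ F.seqClass j z ≠ 0 := by
  induction j with
  | zero =>
    refine ⟨cons F.one 0, cons_mem F.one_mem (zero_mem _), ?_, ?_⟩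
    · rw [seqD_cons, map_zero, d_one, Pi.zero_apply, smul_zero, add_zero]
      exact cons_zero_shift 0
    · rw [seqClass_apply]
      simp [cons, F.η_one]
  | succ j ih =>
    obtain ⟨z, hz, hdz, hzl⟩ := ih (by omega)
    have hdc : F.d (g • ι A s • z 0) = 0 := by
      have : F.d (z 0) = -(ι A s • z 1) := eq_neg_of_add_eq_zero_left congr($hdz 0)
      rw [map_smul, d_ι_smul, this, smul_neg, ι_smul_ι_smul, neg_zero, sub_zero, smul_smul,
        mul_comm, hfg.mul_eq_zero, zero_smul]
    obtain ⟨e, he, hde⟩ := exact (1 + 2 * j) (by omega) (by omega) _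
      (Submodule.smul_mem _ g (F.smul_mem (ι_mem_exteriorGrading s) (seqGr_zero_mem hz))) hdc
    have hz' : cons (-e) (g • z) ∈ F.seqGr (2 * j + 2) :=
      cons_mem (neg_mem (by convert he using 2; ring))
        (Submodule.smul_mem _ g (by simpa using hz))
    have hdz' : F.seqD s (cons (-e) (g • z)) = 0 := by
      rw [seqD_cons, map_neg, hde, map_smul, hdz, smul_zero, Pi.smul_apply, smul_comm _ g,
        neg_add_cancel]
      exact cons_zero_shift 0
    refine ⟨_, by convert hz' using 2; push_cast; ring, hdz', ?_⟩
    rw [hF.seqClass_succ hw hz' (zero_mem _) hz (by rw [hdz', smul_zero])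
      (by rw [map_zero, sub_zero]; rfl)]
    exact neg_ne_zero.2 (mul_ne_zero hzl hlw)

end Class

end Totalization

section CurvedComplex

/-- A Koszul module as a chain complex. -/
def toCurvedComplex (F : KoszulModule φ) : CurvedComplex A 0 where
  carrier := F.carrier
  gr := F.gr
  free_gr := F.gr_free
  gr_of_neg := F.gr_of_neg
  d := F.d
  d_mem := F.d_mem
  exists_d_d_eq _ := ⟨0, zero_mem _, by rw [F.d_d, smul_zero]⟩

/-- The sequences with the endomorphism `d + s τ`. -/
noncomputable def totalization (F : KoszulModule φ) (s : V) : CurvedComplex A (φ s) where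
  carrier := ℕ → F.carrier
  gr := F.seqGr
  free_gr _ := free_seqGr
  gr_of_neg _ := seqGr_of_neg F
  d := F.seqD s
  d_mem := seqD_mem
  exists_d_d_eq hx := ⟨_, shift_mem hx, seqD_seqD _⟩

variable {F : KoszulModule φ} {s : V} {M : Type*} [AddCommGroup M] [Module A M]

theorem tmul_eq_zero_of_mem_annihilator_smul_top {P : Type*} [AddCommGroup P] [Module A P] {y : P}
    (hy : y ∈ Module.annihilator A M • (⊤ : Submodule A P)) (m : M) : m ⊗ₜ[A] y = 0 := by
  refine Submodule.smul_induction_on (p := fun y ↦ m ⊗ₜ[A] y = 0) hy (fun a ha y _ ↦ ?_)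
    fun y z hy hz ↦ ?_
  · rw [← TensorProduct.smul_tmul, Module.mem_annihilator.1 ha, TensorProduct.zero_tmul]
  · rw [TensorProduct.tmul_add, hy, hz, add_zero]

theorem tmul_ι_smul_eq_zero (hs : s ∈ Module.annihilator A M • (⊤ : Submodule A V)) (m : M)
    {i j : ℤ} {z : F.carrier} (hz : z ∈ F.gr i) (hj : ι A s • z ∈ F.gr j) (hij : j = 1 + i) :
    m ⊗ₜ[A] (⟨ι A s • z, hj⟩ : F.gr j) = 0 := by
  subst hij
  let L : V →ₗ[A] F.gr (1 + i) :=
    (LinearMap.toSpanSingleton (ExteriorAlgebra A V) F.carrier z).restrictScalars A ∘ₗ ι A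
      |>.codRestrict _ fun v ↦ F.smul_mem (ι_mem_exteriorGrading v) hz
  exact tmul_eq_zero_of_mem_annihilator_smul_top (y := L s)
    (Submodule.smul_top_le_comap_smul_top _ L hs) m

variable (F s M) in
/-- The splitting off of the first entry, after tensoring with `M`. -/
noncomputable def tensorConsEquiv (i : ℤ) : M ⊗[A] (F.totalization s).gr i ≃ₗ[A]
    (M ⊗[A] F.toCurvedComplex.gr i) × (M ⊗[A] (F.totalization s).gr (i - 2)) :=
  (TensorProduct.congr (.refl A M) (F.consEquiv i).symm).trans (TensorProduct.prodRight A A M _ _)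

theorem tensorConsEquiv_lTensor_dOn (hs : s ∈ Module.annihilator A M • (⊤ : Submodule A V))
    {i j : ℤ} (h : j + 1 = i) (h' : j - 2 + 1 = i - 2) (x : M ⊗[A] (F.totalization s).gr i) :
    F.tensorConsEquiv s M j (((F.totalization s).dOn h).lTensor M x) =
      ((F.toCurvedComplex.dOn h).lTensor M).prodMap (((F.totalization s).dOn h').lTensor M)
        (F.tensorConsEquiv s M i x) := by
  suffices (F.tensorConsEquiv s M j).toLinearMap ∘ₗ ((F.totalization s).dOn h).lTensor M =
      ((F.toCurvedComplex.dOn h).lTensor M).prodMap (((F.totalization s).dOn h').lTensor M) ∘ₗ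
        (F.tensorConsEquiv s M i).toLinearMap from congr($this x)
  refine TensorProduct.ext' fun m ⟨x, hx⟩ ↦ Prod.ext ?_ rfl
  have j_eq : j = 1 + (i - 2 * (1 : ℕ)) := by omega
  have ι_smul_mem : ι A s • x 1 ∈ F.gr j :=
    j_eq ▸ F.smul_mem (ι_mem_exteriorGrading s) (mem_seqGr.1 hx 1)
  have d_mem : F.d (x 0) ∈ F.gr j := by
    obtain rfl : j = i - 1 := by omega
    exact F.d_mem (seqGr_zero_mem hx)
  change m ⊗ₜ[A] ((⟨F.d (x 0), d_mem⟩ : F.gr j) + ⟨ι A s • x 1, ι_smul_mem⟩) =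
    m ⊗ₜ[A] (⟨F.d (x 0), d_mem⟩ : F.gr j)
  rw [TensorProduct.tmul_add, tmul_ι_smul_eq_zero hs m (mem_seqGr.1 hx 1) _ j_eq, add_zero]

theorem tensorHomologyLength_totalization
    (hs : s ∈ Module.annihilator A M • (⊤ : Submodule A V)) (n : ℤ) :
    (F.totalization s).tensorHomologyLength M n = F.toCurvedComplex.tensorHomologyLength M n +
      (F.totalization s).tensorHomologyLength M (n - 2) := by
  rw [(F.totalization s).tensorHomologyLength_eq M (j := n - 2) (i := n + 1 - 2) (k := n - 1 - 2)
    (by ring) (by ring)]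
  exact (homologyLength_congr _ _ (tensorConsEquiv_lTensor_dOn hs _ _) fun x ↦ by
    rw [← tensorConsEquiv_lTensor_dOn hs, LinearEquiv.map_eq_zero_iff]).trans
      (homologyLength_prodMap _ _ _ _)

variable [IsLocalRing A] {N : ℕ}

theorem detectsHomology_toCurvedComplex (hφ : LinearMap.range φ = maximalIdeal A)
    (exact : ∀ i : ℤ, 0 < i → i < N + 2 → F.ExactAt i) :
    F.toCurvedComplex.DetectsHomology
      (fun _ : Unit ↦ Algebra.linearMap A (ResidueField A) ∘ₗ F.η) (fun _ ↦ 0) (N + 1) where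
  deg_injective := Function.injective_of_subsingleton _
  apply_d _ x hx := residue_η_d hφ (by rwa [Nat.cast_zero, zero_add] at hx)
  exists_d_eq hn x y hx _ hdx hcx := exists_d_eq_of_le hφ exact (by exact_mod_cast hn) hx
    (hdx.trans (zero_smul _ _)) fun h ↦ hcx () (by exact_mod_cast h.symm)
  exists_apply_ne_zero _ _ := ⟨F.one, F.one_mem, F.d_one, by
    change residue A (F.η F.one) ≠ 0
    rw [F.η_one, map_one]
    exact one_ne_zero⟩

variable {g : A} {l : LinearMap.ker φ →ₗ[A] ResidueField A}

theorem RepresentsClass.detectsHomology_totalization (hφ : LinearMap.range φ = maximalIdeal A)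
    (hfg : IsExactPair (φ s) g) (hF : F.RepresentsClass l) {w : LinearMap.ker φ}
    (hw : (w : V) = g • s) (hlw : l w ≠ 0)
    (exact : ∀ i : ℤ, 0 < i → i < N + 2 → F.ExactAt i) :
    (F.totalization s).DetectsHomology F.seqClass (2 * ·) (N + 1) where
  deg_injective := mul_right_injective₀ two_ne_zero
  apply_d j x hx := seqClass_seqD hφ (by exact_mod_cast hx)
  exists_d_eq hn x y hx hy hdx hcx := hF.exists_seqD_eq hφ hfg hw hlw exact (by exact_mod_cast hn)
    hx hy hdx fun j hj ↦ hcx j (by exact_mod_cast hj.symm)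
  exists_apply_ne_zero j hj := hF.exists_seqClass_ne_zero hfg hw hlw exact hj

end CurvedComplex

end KoszulModule

end KoszulModule

section EvenSum

variable (t : ℕ → ℕ∞) (n : ℕ)

theorem card_subtype_two_mul : ENat.card {j : ℕ // 2 * j = n} = if Even n then 1 else 0 := by
  split_ifs with hn
  · obtain ⟨j, rfl⟩ := hn.exists_two_nsmul
    simp
  · have : IsEmpty {j : ℕ // 2 * j = n} := ⟨fun j ↦ hn (j.2 ▸ even_two_mul _)⟩
    exact (ENat.card_eq_zero_iff_empty _).2 this

theorem sum_antidiagonal_card_two_mul_of_lt_two (hn : n < 2) :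
    ∑ ij ∈ antidiagonal n, ENat.card {j : ℕ // 2 * j = ij.1} * t ij.2 =
      t n := by
  interval_cases n <;> simp [card_subtype_two_mul, Finset.Nat.sum_antidiagonal_succ]

theorem sum_antidiagonal_card_two_mul_add_two :
    ∑ ij ∈ antidiagonal (n + 2),
        ENat.card {j : ℕ // 2 * j = ij.1} * t ij.2 =
      t (n + 2) + ∑ ij ∈ antidiagonal n,
        ENat.card {j : ℕ // 2 * j = ij.1} * t ij.2 := by
  simp [card_subtype_two_mul, Finset.Nat.sum_antidiagonal_succ, add_assoc, Nat.even_add_one,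
    Nat.odd_add_one]

theorem sum_antidiagonal_card_two_mul_ne_top {t : ℕ → ℕ∞} (ht : ∀ n, t n ≠ ⊤) (n : ℕ) :
    ∑ ij ∈ antidiagonal n, ENat.card {j : ℕ // 2 * j = ij.1} * t ij.2 ≠
      ⊤ := by
  refine ENat.sum_ne_top.2 fun ij _ ↦ ?_
  rw [card_subtype_two_mul, ite_mul, one_mul, zero_mul]
  split_ifs
  exacts [ht _, ENat.zero_ne_top]

end EvenSum

section ChangeOfRings

theorem exists_linearMap_range_eq {A : Type*} [CommRing A] {I J : Ideal A} (hI : I.FG) {f : A}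
    (hf : f ∈ I * J) : ∃ (r : ℕ) (φ : (Fin r → A) →ₗ[A] A), LinearMap.range φ = I ∧
      ∃ s ∈ J • (⊤ : Submodule A (Fin r → A)), φ s = f := by
  obtain ⟨r, φ, hφ⟩ := (Submodule.fg_iff_exists_fin_linearMap A A).1 hI
  refine ⟨r, φ, hφ, ?_⟩
  rwa [mul_comm, ← smul_eq_mul, ← hφ, LinearMap.range_eq_map, ← Submodule.map_smul''] at hf

variable {A R : Type u} [CommRing A] [IsNoetherianRing A] [IsLocalRing A] [CommRing R]
  [IsLocalRing R] [Algebra A R] {f g : A}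

theorem torLength_eq_of_isExactPair (hR : Function.Surjective (algebraMap A R))
    (hker : RingHom.ker (algebraMap A R) = Ideal.span {f}) (hfg : IsExactPair f g)
    (hg : g ∈ maximalIdeal A) (M : Type u) [AddCommGroup M] [Module A M] [Module R M]
    [IsScalarTower A R M] [Module.Finite R M]
    (hf : f ∈ maximalIdeal A * Module.annihilator A M) (n : ℕ) :
    torLength R M n = torLength A M n := by
  have := IsLocalHom.of_surjective _ hR
  have := isNoetherianRing_of_surjective A R _ hR
  have : Module.Finite A R := .of_surjective (Algebra.linearMap A R) hR
  have : Module.Finite A M := .trans R M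
  obtain ⟨r, φ, hφ, s, hs, rfl⟩ := exists_linearMap_range_eq (Ideal.fg_of_isNoetherianRing _) hf
  let w : LinearMap.ker φ :=
    ⟨g • s, by rw [LinearMap.mem_ker, map_smul, smul_eq_mul, mul_comm, hfg.mul_eq_zero]⟩
  obtain ⟨l, hl, hlw⟩ := exists_functional_koszulBoundaries φ hφ hfg hg
  obtain ⟨F, hF, exact⟩ := KoszulModule.exists_representsClass_exactAt hφ l hl n
  have length_total (i : ℕ) (hi : i ≤ n + 1) : (F.totalization s).tensorHomologyLength M i =
      ∑ ij ∈ antidiagonal i,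
        ENat.card {j : ℕ // 2 * j = ij.1} * torLength R M ij.2 :=
    (hF.detectsHomology_totalization hφ hfg (w := w) rfl (hlw w rfl) exact).tensorHomologyLength_eq
      hR hker M hi
  have length_F : F.toCurvedComplex.tensorHomologyLength M n = torLength A M n := by
    rw [(F.detectsHomology_toCurvedComplex hφ exact).tensorHomologyLength_eq (R := A)
      Function.surjective_id (by ext; simp) M n.le_succ]
    cases n <;> simp [Finset.Nat.sum_antidiagonal_succ]
  have length_seq := F.tensorHomologyLength_totalization hs n
  rw [length_total n n.le_succ, length_F] at length_seq
  rcases lt_or_ge n 2 with hn | hn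
  · rwa [CurvedComplex.tensorHomologyLength_of_neg _ _ (by omega), add_zero,
      sum_antidiagonal_card_two_mul_of_lt_two _ _ hn] at length_seq
  · obtain ⟨n, rfl⟩ := Nat.exists_eq_add_of_le' hn
    rw [show ((n + 2 : ℕ) : ℤ) - 2 = n by push_cast; ring, length_total n (by omega),
      sum_antidiagonal_card_two_mul_add_two] at length_seq
    exact (WithTop.add_right_inj (sum_antidiagonal_card_two_mul_ne_top (torLength_ne_top M) n)).1
      length_seq

end ChangeOfRings

section ResidueField

variable {A : Type u} [CommRing A] [IsLocalRing A]

theorem torLength_congr {M N : Type u} [AddCommGroup M] [Module A M] [AddCommGroup N] [Module A N]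
    (e : M ≃ₗ[A] N) (n : ℕ) : torLength A M n = torLength A N n :=
  (((Tor (ModuleCat A) n).mapIso e.toModuleIso).app
    (ModuleCat.of A (ResidueField A))).toLinearEquiv.length_eq

theorem torLength_eq_zero_of_subsingleton (M : Type u) [AddCommGroup M] [Module A M]
    [Subsingleton M] (n : ℕ) : torLength A M n = 0 := by
  induction n generalizing M with
  | zero =>
    rw [(torLength_of_cover (p := (LinearMap.id : M →ₗ[A] M)) Function.surjective_id
      fun x _ ↦ Subsingleton.elim x 0 ▸ zero_mem _).1, Module.finrank_zero_of_subsingleton,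
      Nat.cast_zero]
  | succ n ih =>
    rw [(torLength_of_cover (p := (LinearMap.id : M →ₗ[A] M)) Function.surjective_id
      fun x _ ↦ Subsingleton.elim x 0 ▸ zero_mem _).2, ih]

theorem nonempty_residueField_linearEquiv {R : Type*} [CommRing R] [IsLocalRing R] [Algebra A R]
    (hR : Function.Surjective (algebraMap A R)) :
    Nonempty (ResidueField A ≃ₗ[A] ResidueField R) := by
  have hk : Function.Surjective (Algebra.ofId A (ResidueField R)) := residue_surjective.comp hR
  exact ⟨(Submodule.quotEquivOfEq _ _
    (ker_eq_maximalIdeal (Algebra.ofId A (ResidueField R)).toRingHom hk).symm).trans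
    (Ideal.quotientKerAlgEquivOfSurjective hk).toLinearEquiv⟩

theorem annihilator_le_maximalIdeal (A M : Type*) [CommRing A] [IsLocalRing A] [AddCommGroup M]
    [Module A M] [Nontrivial M] : Module.annihilator A M ≤ maximalIdeal A :=
  le_maximalIdeal fun h ↦ not_subsingleton M (Module.annihilator_eq_top_iff.1 h)
end ResidueField

/-- **Inertness, exact zerodivisor case.** Let `f, g` be an exact pair of
zerodivisors in the maximal ideal `m` of a Noetherian local ring `Q` and set
`R = Q/(f)`. If `M` is a finitely generated `R`-module with `f ∈ m·ann_Q(M)`,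
then `M` is inert by `Q → R`:
`∑_{p+q=i} β_p^R(M)·β_q^Q(k) = ∑_{p+q=i} β_p^Q(M)·β_q^R(k)` for all `i ≥ 0`. -/
theorem inert_of_exact_zerodivisor_of_ann
    (Q : Type) [CommRing Q] [IsNoetherianRing Q] [IsLocalRing Q]
    (f g : Q) (hf0 : f ≠ 0) (hg0 : g ≠ 0)
    (hfm : f ∈ IsLocalRing.maximalIdeal Q) (hgm : g ∈ IsLocalRing.maximalIdeal Q)
    (hannf : ∀ x : Q, x * f = 0 ↔ x ∈ Ideal.span {g})
    (hanng : ∀ x : Q, x * g = 0 ↔ x ∈ Ideal.span {f})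
    [IsLocalRing (Q ⧸ Ideal.span {f})]
    (M : Type) [AddCommGroup M] [Module Q M] [Module (Q ⧸ Ideal.span {f}) M]
    [IsScalarTower Q (Q ⧸ Ideal.span {f}) M]
    [Module.Finite (Q ⧸ Ideal.span {f}) M]
    (hann : f ∈ IsLocalRing.maximalIdeal Q * Module.annihilator Q M)
    (i : ℕ) :
    ∑ p ∈ Finset.range (i + 1),
        bettiNumber (Q ⧸ Ideal.span {f}) M p *
          bettiNumber Q (IsLocalRing.ResidueField Q) (i - p) =
      ∑ p ∈ Finset.range (i + 1),
        bettiNumber Q M p *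
          bettiNumber (Q ⧸ Ideal.span {f})
            (IsLocalRing.ResidueField (Q ⧸ Ideal.span {f})) (i - p) := by
  simp only [bettiNumber_eq_toNat_torLength]
  rcases subsingleton_or_nontrivial M with hM | hM
  · simp [torLength_eq_zero_of_subsingleton M]
  have hQR : Function.Surjective (algebraMap Q (Q ⧸ Ideal.span {f})) := Ideal.Quotient.mk_surjective
  have torLength_eq := torLength_eq_of_isExactPair hQR Ideal.mk_ker ⟨hannf, hanng⟩ hgm
  obtain ⟨e⟩ := nonempty_residueField_linearEquiv hQR
  have hann_residueField : Module.annihilator Q (ResidueField (Q ⧸ Ideal.span {f})) =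
      maximalIdeal Q := e.annihilator_eq.symm.trans Ideal.annihilator_quotient
  have hf : f ∈ maximalIdeal Q * maximalIdeal Q :=
    Ideal.mul_mono_right (annihilator_le_maximalIdeal Q M) hann
  refine Finset.sum_congr rfl fun p _ ↦ ?_
  rw [torLength_eq M hann, torLength_eq (ResidueField _) (hann_residueField ▸ hf),
    torLength_congr e]
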